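/- arXiv:1506.06688 — 2 statements merged into one kernel-verified Lean document; each statement's English description precedes it below -/
import Mathlib

section
/- Let M be a matrix with t ≥ 1 columns and u ≥ 1 rows and entries in {0, 1, −1}. Then the limit lim_{n→∞} |Grid_n(M)|^{1/n} exists and equals ρ(G(M))², the square of the spectral radius of the row-column graph of M. -/
noncomputable section

open Filter

open scoped Classical

/-- The point `p` (0-based) of the permutation `σ` lies in the cell `(i, j)` of the gridding
determined by the column dividers `c` and row dividers `r`. -/
def InCell {t u k : ℕ} (σ : Equiv.Perm (Fin k)) (c : Fin (t + 1) → ℕ) (r : Fin (u + 1) → ℕ)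
    (i : Fin t) (j : Fin u) (p : Fin k) : Prop :=
  c i.castSucc ≤ (p : ℕ) ∧ (p : ℕ) < c i.succ ∧
    r j.castSucc ≤ (σ p : ℕ) ∧ (σ p : ℕ) < r j.succ

/-- `c`, `r` form an `M`-gridding of the permutation `σ`. -/
def IsGridding {t u k : ℕ} (M : Fin t → Fin u → ℤ) (σ : Equiv.Perm (Fin k))
    (c : Fin (t + 1) → ℕ) (r : Fin (u + 1) → ℕ) : Prop :=
  Monotone c ∧ Monotone r ∧ c 0 = 0 ∧ c (Fin.last t) = k ∧ r 0 = 0 ∧ r (Fin.last u) = k ∧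
    ∀ (i : Fin t) (j : Fin u),
      (M i j = 0 → ∀ p : Fin k, ¬ InCell σ c r i j p) ∧
        (M i j = 1 → ∀ p q : Fin k, InCell σ c r i j p → InCell σ c r i j q →
          p < q → σ p < σ q) ∧
          (M i j = -1 → ∀ p q : Fin k, InCell σ c r i j p → InCell σ c r i j q →
            p < q → σ q < σ p)

/-- Membership in the monotone grid class `Grid(M)`. -/
def InGridClass {t u : ℕ} (M : Fin t → Fin u → ℤ) {k : ℕ} (σ : Equiv.Perm (Fin k)) : Prop :=
  ∃ (c : Fin (t + 1) → ℕ) (r : Fin (u + 1) → ℕ), IsGridding M σ c r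

/-- `|Grid_n(M)|`, the number of permutations of length `n` in the grid class of `M`. -/
def gridCount {t u : ℕ} (M : Fin t → Fin u → ℤ) (n : ℕ) : ℕ :=
  Nat.card {σ : Equiv.Perm (Fin n) // InGridClass M σ}

/-- The row-column graph `G(M)`: bipartite graph on columns and rows of `M`, with `c_i`
adjacent to `r_j` iff `M i j ≠ 0`. -/
def rowColGraph {t u : ℕ} (M : Fin t → Fin u → ℤ) : SimpleGraph (Fin t ⊕ Fin u) :=
  SimpleGraph.fromRel fun x y =>
    ∃ (i : Fin t) (j : Fin u), x = Sum.inl i ∧ y = Sum.inr j ∧ M i j ≠ 0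

/-- The (real) adjacency matrix of a finite simple graph. -/
def graphAdjMatrix {V : Type*} [Fintype V] (G : SimpleGraph V) : Matrix V V ℝ :=
  Matrix.of fun a b => if G.Adj a b then (1 : ℝ) else 0

/-- The spectral radius of a finite simple graph: the largest (real) eigenvalue of its
adjacency matrix, i.e. the largest real root of the characteristic polynomial. -/
def graphSpectralRadius {V : Type*} [Fintype V] [DecidableEq V] (G : SimpleGraph V) : ℝ :=
  sSup {x : ℝ | (graphAdjMatrix G).charpoly.IsRoot x}

/-!
Assign columns to the positions and rows to the values of a permutation by words `κ` and `ϱ`. A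
permutation gridded in this way is determined by the two words listing the cells of its points, by
position and by value. Any two words over the nonzero cells can occur, provided that they have the
same type (the same number of occurrences of each cell) and project to `κ` and `ϱ` respectively. The
number of such pairs does not change when `κ` and `ϱ` are rearranged, so up to the polynomially many
choices of monotone `κ` and `ϱ`, `|Grid_n(M)|` is the maximum of this number over all `κ` and `ϱ`.

Let `m` be the type of the two words and `a`, `b` the types of `κ` and `ϱ`. Counting words of given
type bounds the number of pairs by `∏ (a i * b j / m (i, j) ^ 2) ^ m (i, j)`. By the weighted AM-GM
inequality this is at most `((∑ √(a i) * √(b j)) / n) ^ (2 * n)`, the sum being over the nonzero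
cells, and the Rayleigh quotient of the adjacency matrix at `(√a, √b)` bounds it by `ρ ^ (2 * n)`.
There are polynomially many types.

Conversely, let `(x, y)` be an eigenvector for `ρ`, so that `2 * K = ρ * (|x|² + |y|²)` with `K` the
sum of `x i * y j` over the nonzero cells. Expanded, `K ^ n` is a sum over words, and Cauchy-Schwarz
over their types bounds `K ^ (2 * n)`, up to a polynomial factor, by a sum over pairs of words of
equal type. Grouping these by `κ` and `ϱ` bounds it by `|Grid_n(M)| * (|x|² * |y|²) ^ n`, while
`K² ≥ ρ² * |x|² * |y|²`.
-/

section Words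

open Finset

variable {ι α γ δ : Type*} [Fintype ι]

/-- The number of occurrences of the letter `a` in the word `F`. As a function of `a` this is the
type (Parikh vector) of `F`. -/
def letterCount [DecidableEq α] (F : ι → α) (a : α) : ℕ := #{p | F p = a}

lemma card_subtype_eq_letterCount [DecidableEq α] (F : ι → α) (a : α) :
    Fintype.card {p // F p = a} = letterCount F a :=
  Fintype.card_subtype _

lemma sum_letterCount [Fintype α] [DecidableEq α] (F : ι → α) :
    ∑ a, letterCount F a = Fintype.card ι :=
  (card_eq_sum_card_fiberwise fun _ _ => mem_univ _).symm

lemma letterCount_le_card [DecidableEq α] (F : ι → α) (a : α) :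
    letterCount F a ≤ Fintype.card ι :=
  card_le_univ _

lemma letterCount_comp_equiv [DecidableEq α] (F : ι → α) (e : Equiv.Perm ι) :
    letterCount (F ∘ e) = letterCount F := by
  funext a
  rw [← card_subtype_eq_letterCount, ← card_subtype_eq_letterCount]
  exact Fintype.card_congr (e.subtypeEquiv fun _ => Iff.rfl)

lemma letterCount_comp [Fintype γ] [DecidableEq γ] [DecidableEq δ] (g : γ → δ) (F : ι → γ)
    (d : δ) : letterCount (g ∘ F) d = ∑ c with g c = d, letterCount F c := by
  simp [letterCount, sum_card_fiberwise_eq_card_filter]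

lemma mem_of_letterCount_ne_zero [DecidableEq α] {F : ι → α} {s : Finset α} (hF : ∀ p, F p ∈ s)
    {a : α} (ha : letterCount F a ≠ 0) : a ∈ s := by
  obtain ⟨p, hp⟩ := card_ne_zero.mp ha
  exact (mem_filter.mp hp).2 ▸ hF p

lemma prod_comp_eq_prod_pow_letterCount {R : Type*} [CommMonoid R] [Fintype α] [DecidableEq α]
    (f : α → R) (F : ι → α) : ∏ p, f (F p) = ∏ a, f a ^ letterCount F a := by
  simp [← prod_fiberwise' univ F f, letterCount]

lemma exists_comp_equiv_eq_of_letterCount_eq [DecidableEq α] {F F' : ι → α}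
    (h : letterCount F = letterCount F') : ∃ e : Equiv.Perm ι, F' ∘ e = F := by
  let e (a : α) : {p // F p = a} ≃ {p // F' p = a} :=
    Fintype.equivOfCardEq <| by simp_rw [card_subtype_eq_letterCount, h]
  exact ⟨Equiv.ofFiberEquiv e, funext (Equiv.ofFiberEquiv_map e)⟩

lemma prod_comp_eq_of_letterCount_eq {R : Type*} [CommMonoid R] [DecidableEq α] (f : α → R)
    {F F' : ι → α} (h : letterCount F = letterCount F') : ∏ p, f (F p) = ∏ p, f (F' p) := by
  obtain ⟨e, rfl⟩ := exists_comp_equiv_eq_of_letterCount_eq h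
  exact Equiv.prod_comp e fun p => f (F' p)

lemma forall_mem_of_letterCount_eq [DecidableEq α] {F F' : ι → α}
    (h : letterCount F = letterCount F') {s : Finset α} (hF : ∀ p, F p ∈ s) (p : ι) :
    F' p ∈ s := by
  obtain ⟨e, he⟩ := exists_comp_equiv_eq_of_letterCount_eq h.symm
  exact congrFun he p ▸ hF (e p)

lemma card_image_letterCount_le [Fintype α] [DecidableEq α] (W : Finset (ι → α)) :
    #(W.image letterCount) ≤ (Fintype.card ι + 1) ^ Fintype.card α := by
  calc #(W.image letterCount)
      ≤ #(Fintype.piFinset fun _ : α => range (Fintype.card ι + 1)) :=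
        card_le_card <| image_subset_iff.mpr fun F _ => by
          simpa [Nat.lt_succ_iff] using letterCount_le_card F
    _ = _ := by simp

lemma card_filter_letterCount_eq_mul_prod_le [DecidableEq ι] [Fintype γ] [DecidableEq γ]
    [DecidableEq δ] (g : γ → δ) (F₀ : ι → γ) :
    #{F : ι → γ | g ∘ F = g ∘ F₀ ∧ letterCount F = letterCount F₀} *
        ∏ c, letterCount F₀ c ^ letterCount F₀ c ≤
      ∏ c, letterCount (g ∘ F₀) (g c) ^ letterCount F₀ c := by
  -- Weighting each letter `c` by `letterCount F₀ c` gives every word of the type of `F₀` the same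
  -- weight, while the total weight of the words lying over `g ∘ F₀` factors over the positions.
  set S : Finset (ι → γ) := {F | g ∘ F = g ∘ F₀ ∧ letterCount F = letterCount F₀}
  calc #S * ∏ c, letterCount F₀ c ^ letterCount F₀ c
      = ∑ F ∈ S, ∏ p, letterCount F₀ (F p) := by
        rw [← smul_eq_mul, ← sum_const]
        refine sum_congr rfl fun F hF => ?_
        rw [prod_comp_eq_prod_pow_letterCount, (mem_filter.mp hF).2.2]
    _ ≤ ∑ F ∈ Fintype.piFinset fun p => {c | g c = g (F₀ p)}, ∏ p, letterCount F₀ (F p) := by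
        refine sum_le_sum_of_subset fun F hF => ?_
        simpa using congrFun (mem_filter.mp hF).2.1
    _ = ∏ p, letterCount (g ∘ F₀) (g (F₀ p)) := by
        simp only [← prod_univ_sum, letterCount_comp]
    _ = ∏ c, letterCount (g ∘ F₀) (g c) ^ letterCount F₀ c :=
        prod_comp_eq_prod_pow_letterCount (fun c => letterCount (g ∘ F₀) (g c)) F₀

end Words

section Inequalities

open Finset

lemma sq_sum_le_card_image_mul_sum {γ δ : Type*} [DecidableEq δ] (s : Finset γ) (f : γ → δ)
    (q : γ → ℝ) :
    (∑ a ∈ s, q a) ^ 2 ≤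
      #(s.image f) * ∑ ab ∈ s ×ˢ s with f ab.1 = f ab.2, q ab.1 * q ab.2 := by
  calc (∑ a ∈ s, q a) ^ 2
      = (∑ d ∈ s.image f, ∑ a ∈ s with f a = d, q a) ^ 2 := by
        rw [sum_fiberwise_of_maps_to fun a => mem_image_of_mem f]
    _ ≤ #(s.image f) * ∑ d ∈ s.image f, (∑ a ∈ s with f a = d, q a) ^ 2 :=
        sq_sum_le_card_mul_sum_sq
    _ = #(s.image f) * ∑ ab ∈ s ×ˢ s with f ab.1 = f ab.2, q ab.1 * q ab.2 := by
        congr 1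
        rw [sum_filter, sum_product,
          ← sum_fiberwise_of_maps_to fun a (ha : a ∈ s) => mem_image_of_mem f ha]
        refine sum_congr rfl fun d _ => ?_
        rw [sq, sum_mul_sum]
        refine sum_congr rfl fun a ha => ?_
        rw [sum_filter]
        simp only [(mem_filter.mp ha).2, eq_comm]

lemma prod_pow_mul_sum_pow_le {γ : Type*} [Fintype γ] (m : γ → ℕ) (z : γ → ℝ) (hz : ∀ c, 0 ≤ z c)
    {s : Finset γ} (hs : ∀ c, m c ≠ 0 → c ∈ s) :
    (∏ c, z c ^ m c) * (∑ c, m c : ℕ) ^ (∑ c, m c) ≤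
      (∑ c ∈ s, z c) ^ (∑ c, m c) * ∏ c, (m c : ℝ) ^ m c := by
  set N := ∑ c, m c with hN
  rcases N.eq_zero_or_pos with h0 | hpos
  · have hm : ∀ c, m c = 0 := by simpa [hN] using h0
    simp [h0, hm]
  have hNR : (0 : ℝ) < N := Nat.cast_pos.mpr hpos
  have hsum : ∑ c, (m c : ℝ) = N := by rw [hN, Nat.cast_sum]
  have amgm : (∏ c, (z c / m c) ^ (m c : ℝ)) ^ (N : ℝ)⁻¹ ≤ (∑ c, m c * (z c / m c)) / N := by
    simpa only [hsum] using Real.geom_mean_le_arith_mean univ (fun c => (m c : ℝ))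
      (fun c => z c / m c) (fun c _ => Nat.cast_nonneg _) (hsum ▸ hNR)
      (fun c _ => div_nonneg (hz c) (Nat.cast_nonneg _))
  have hmean : ∑ c, m c * (z c / m c) ≤ ∑ c ∈ s, z c := by
    rw [← sum_subset s.subset_univ fun c _ hc => by simp [not_imp_comm.mp (hs c) hc]]
    refine sum_le_sum fun c _ => ?_
    rw [mul_div_left_comm]
    exact mul_le_of_le_one_right (hz c) (div_self_le_one _)
  have hdiv : ∏ c, z c ^ m c / (m c : ℝ) ^ m c ≤ (∑ c ∈ s, z c) ^ N / (N : ℝ) ^ N := by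
    have hP : 0 ≤ ∏ c, (z c / m c) ^ (m c : ℝ) :=
      prod_nonneg fun c _ => Real.rpow_nonneg (div_nonneg (hz c) (Nat.cast_nonneg _)) _
    have h := amgm.trans (div_le_div_of_nonneg_right hmean hNR.le)
    rw [Real.rpow_inv_le_iff_of_pos hP
      (div_nonneg (sum_nonneg fun c _ => hz c) hNR.le) hNR] at h
    simpa only [Real.rpow_natCast, div_pow] using h
  have hself : ∀ k : ℕ, (0 : ℝ) < (k : ℝ) ^ k := fun k => by
    exact_mod_cast Nat.pow_self_pos
  rwa [prod_div_distrib, div_le_div_iff₀ (prod_pos fun c _ => hself _) (hself N)] at hdiv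

end Inequalities

section LetterwiseMonotone

variable {ι γ : Type*} [LinearOrder ι]

/-- `σ` is increasing on the positions of every letter of sign `1` of the word `F`, and decreasing
on the positions of every letter of sign `-1`. -/
def LetterwiseMonotone (s : γ → ℤ) (F : ι → γ) (σ : ι → ι) : Prop :=
  ∀ ⦃p q⦄, p < q → F p = F q → (s (F p) = 1 → σ p < σ q) ∧ (s (F p) = -1 → σ q < σ p)

lemma exists_equiv_strictMono_or_strictAnti {A B : Type*} [Fintype A] [Fintype B] [LinearOrder A]
    [LinearOrder B] (h : Fintype.card A = Fintype.card B) (s : ℤ) :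
    ∃ e : A ≃ B, (s = 1 → StrictMono e) ∧ (s = -1 → StrictAnti e) := by
  let up : A ≃o B :=
    (Fintype.orderIsoFinOfCardEq A h).symm.trans (Fintype.orderIsoFinOfCardEq B rfl)
  by_cases hs : s = 1
  · exact ⟨up.toEquiv, fun _ => up.strictMono, by omega⟩
  · let down : A ≃o Bᵒᵈ :=
      (Fintype.orderIsoFinOfCardEq A h).symm.trans (Fintype.orderIsoFinOfCardEq Bᵒᵈ rfl)
    exact ⟨down.toEquiv.trans OrderDual.ofDual, fun hsp => absurd hsp hs, fun _ => down.strictMono⟩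

lemma exists_letterwiseMonotone [Fintype ι] [DecidableEq γ] (s : γ → ℤ) {F F' : ι → γ}
    (h : letterCount F = letterCount F') :
    ∃ σ : Equiv.Perm ι, F' ∘ σ = F ∧ LetterwiseMonotone s F σ := by
  have hcard (c : γ) : Fintype.card {p // F p = c} = Fintype.card {p // F' p = c} := by
    simp_rw [card_subtype_eq_letterCount, h]
  choose e hinc hdec using fun c => exists_equiv_strictMono_or_strictAnti (hcard c) (s c)
  have happ (c : γ) (q : ι) (hq : F q = c) : Equiv.ofFiberEquiv e q = e c ⟨q, hq⟩ := by
    subst hq; rfl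
  refine ⟨Equiv.ofFiberEquiv e, funext fun p => Equiv.ofFiberEquiv_map e p, fun p q hpq hF => ?_⟩
  rw [happ _ p rfl, happ _ q hF.symm]
  exact ⟨fun hs => hinc _ hs (Subtype.mk_lt_mk.mpr hpq),
    fun hs => hdec _ hs (Subtype.mk_lt_mk.mpr hpq)⟩

lemma eq_refl_of_lt_of_comp_eq [Finite ι] {F : ι → γ} {τ : Equiv.Perm ι} (hF : F ∘ τ = F)
    (hτ : ∀ ⦃p q⦄, p < q → F p = F q → τ p < τ q) : τ = Equiv.refl ι := by
  ext p
  let f : {q // F q = F p} → {q // F q = F p} := fun q => ⟨τ q, (congrFun hF q).trans q.2⟩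
  have hf : StrictMono f := fun q r hqr => hτ hqr (q.2.trans r.2.symm)
  exact congrArg Subtype.val (le_antisymm hf.apply_le (hf.le_apply (x := ⟨p, rfl⟩)))

lemma LetterwiseMonotone.eq_of_comp_eq [Finite ι] {s : γ → ℤ} {F F' : ι → γ} {σ σ' : Equiv.Perm ι}
    (hs : ∀ p, s (F p) = 1 ∨ s (F p) = -1) (h : LetterwiseMonotone s F σ)
    (h' : LetterwiseMonotone s F σ') (hσ : F' ∘ σ = F) (hσ' : F' ∘ σ' = F) : σ = σ' := by
  have hF (p : ι) : F (σ'.symm (σ p)) = F p := by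
    rw [← congrFun hσ', ← congrFun hσ]; simp
  suffices σ.trans σ'.symm = Equiv.refl ι by
    ext p
    simpa [Equiv.symm_apply_eq] using Equiv.congr_fun this p
  refine eq_refl_of_lt_of_comp_eq (F := F) (funext hF) fun p q hpq hFpq => ?_
  by_contra! hle
  have hne : σ'.symm (σ q) ≠ σ'.symm (σ p) := by simpa using hpq.ne'
  have hlt := h' (lt_of_le_of_ne hle hne) ((hF q).trans (hFpq.symm.trans (hF p).symm))
  simp only [Equiv.trans_apply, hF, ← hFpq, Equiv.apply_symm_apply] at hlt
  rcases hs p with hsp | hsp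
  · exact lt_asymm (hlt.1 hsp) ((h hpq hFpq).1 hsp)
  · exact lt_asymm (hlt.2 hsp) ((h hpq hFpq).2 hsp)

end LetterwiseMonotone

section ReadingPairs

open Finset

variable {ι α β : Type*}

/-- The nonzero cells of the matrix `M`. -/
def cells [Fintype α] [Fintype β] (M : α → β → ℤ) : Finset (α × β) := {c | M c.1 c.2 ≠ 0}

/-- The word listing the cells of the points of `σ` by position, when the positions are assigned to
columns by `κ` and the values to rows by `ϱ`. The assignments are not required to be monotone, so
the columns and rows need not be intervals. -/
def cellWord (κ : ι → α) (ϱ : ι → β) (σ : ι → ι) : ι → α × β := fun p => (κ p, ϱ (σ p))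

variable [Fintype ι] [Fintype α] [Fintype β]

/-- `σ` is gridded by `M` when positions are assigned to columns by `κ` and values to rows
by `ϱ`. -/
def IsGriddedBy [LinearOrder ι] (M : α → β → ℤ) (κ : ι → α) (ϱ : ι → β) (σ : ι → ι) : Prop :=
  (∀ p, cellWord κ ϱ σ p ∈ cells M) ∧
    LetterwiseMonotone (fun c => M c.1 c.2) (cellWord κ ϱ σ) σ

/-- The pairs of words which can list the cells of the points of a permutation gridded by `M`, `κ`
and `ϱ`, first by position and then by value. -/
def readingPairs [DecidableEq ι] [DecidableEq α] [DecidableEq β] (M : α → β → ℤ) (κ : ι → α)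
    (ϱ : ι → β) : Finset ((ι → α × β) × (ι → α × β)) :=
  {F | (∀ p, F.1 p ∈ cells M) ∧ Prod.fst ∘ F.1 = κ ∧ Prod.snd ∘ F.2 = ϱ ∧
    letterCount F.1 = letterCount F.2}

variable [LinearOrder ι] [DecidableEq α] [DecidableEq β] {M : α → β → ℤ}

lemma mem_readingPairs {κ : ι → α} {ϱ : ι → β} {F F' : ι → α × β} :
    (F, F') ∈ readingPairs M κ ϱ ↔ (∀ p, F p ∈ cells M) ∧ Prod.fst ∘ F = κ ∧ Prod.snd ∘ F' = ϱ ∧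
      letterCount F = letterCount F' := by
  simp [readingPairs]

lemma card_isGriddedBy (hM : ∀ i j, M i j = 0 ∨ M i j = 1 ∨ M i j = -1) (κ : ι → α) (ϱ : ι → β) :
    #{σ : Equiv.Perm ι | IsGriddedBy M κ ϱ σ} = #(readingPairs M κ ϱ) := by
  refine card_nbij (fun σ => (cellWord κ ϱ σ, cellWord κ ϱ σ ∘ σ.symm)) (fun σ hσ => ?_) ?_ ?_
  · refine mem_readingPairs.mpr ⟨(mem_filter.mp hσ).2.1, rfl, ?_, (letterCount_comp_equiv _ _).symm⟩
    ext v
    simp [cellWord]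
  · intro σ hσ σ' hσ' heq
    obtain ⟨hcells, hmono⟩ := (mem_filter.mp hσ).2
    have hmono' := (mem_filter.mp hσ').2.2
    obtain ⟨hpos, hval⟩ : cellWord κ ϱ σ = cellWord κ ϱ σ' ∧
      cellWord κ ϱ σ ∘ σ.symm = cellWord κ ϱ σ' ∘ σ'.symm := Prod.ext_iff.mp heq
    rw [← hpos] at hmono'
    refine hmono.eq_of_comp_eq (F' := cellWord κ ϱ σ ∘ σ.symm) (fun p => ?_) hmono' ?_ ?_
    · exact (hM _ _).resolve_left (mem_filter.mp (hcells p)).2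
    · exact (Equiv.comp_symm_eq _ _ _).mp rfl |>.symm
    · rw [hval, hpos, Function.comp_assoc, Equiv.symm_comp_self, Function.comp_id]
  · rintro ⟨F, F'⟩ hF
    obtain ⟨hcells, rfl, rfl, hcount⟩ := mem_readingPairs.mp hF
    obtain ⟨σ, rfl, hmono⟩ := exists_letterwiseMonotone (fun c => M c.1 c.2) hcount
    have hword : cellWord (Prod.fst ∘ F' ∘ σ) (Prod.snd ∘ F') σ = F' ∘ σ := rfl
    refine ⟨σ, mem_filter.mpr ⟨mem_univ _, ?_⟩, Prod.ext hword ?_⟩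
    · exact ⟨hcells, hmono⟩
    · exact (Equiv.comp_symm_eq σ _ _).mpr hword

lemma card_readingPairs_comp_equiv (M : α → β → ℤ) (κ : ι → α) (ϱ : ι → β) (e e' : Equiv.Perm ι) :
    #(readingPairs M (κ ∘ e) (ϱ ∘ e')) = #(readingPairs M κ ϱ) := by
  symm
  refine card_equiv ((e.symm.arrowCongr (Equiv.refl _)).prodCongr
    (e'.symm.arrowCongr (Equiv.refl _))) fun ⟨F, F'⟩ => ?_
  change (F, F') ∈ _ ↔ (F ∘ e, F' ∘ e') ∈ _
  have hcells : (∀ p, F p ∈ cells M) ↔ ∀ p, F (e p) ∈ cells M := e.surjective.forall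
  simp only [mem_readingPairs, letterCount_comp_equiv, ← Function.comp_assoc,
    e.surjective.injective_comp_right.eq_iff, e'.surjective.injective_comp_right.eq_iff, hcells,
    Function.comp_apply]

end ReadingPairs

section Dividers

open Finset

variable {t u n : ℕ}

/-- `c` is a sequence of dividers cutting the interval `0, …, n - 1` into `t` blocks, and `κ`
assigns to each element the index of its block. -/
def HasDividers (κ : Fin n → Fin t) (c : Fin (t + 1) → ℕ) : Prop :=
  Monotone c ∧ c 0 = 0 ∧ c (Fin.last t) = n ∧
    ∀ (p : Fin n) (i : Fin t), c i.castSucc ≤ (p : ℕ) ∧ (p : ℕ) < c i.succ ↔ κ p = i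

lemma exists_castSucc_le_and_lt_succ {c : Fin (t + 1) → ℕ} (hzero : c 0 = 0) {p : ℕ}
    (hp : p < c (Fin.last t)) : ∃ i : Fin t, c i.castSucc ≤ p ∧ p < c i.succ := by
  by_contra! h
  have hle (k : Fin (t + 1)) : c k ≤ p :=
    Fin.induction (hzero.trans_le p.zero_le) h k
  exact hp.not_ge (hle _)

lemma exists_monotone_hasDividers {c : Fin (t + 1) → ℕ} (hc : Monotone c) (hzero : c 0 = 0)
    (hlast : c (Fin.last t) = n) : ∃ κ : Fin n → Fin t, Monotone κ ∧ HasDividers κ c := by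
  choose κ hle hlt using fun p : Fin n =>
    exists_castSucc_le_and_lt_succ hzero (p.isLt.trans_eq hlast.symm)
  have hblock {p q : ℕ} {i j : Fin t} (hi : c i.castSucc ≤ p) (hpq : p ≤ q) (hj : q < c j.succ) :
      i ≤ j := by
    by_contra! hji
    exact absurd ((hi.trans hpq).trans_lt hj) (hc (Fin.succ_le_castSucc_iff.mpr hji)).not_gt
  refine ⟨κ, fun p q hpq => hblock (hle p) hpq (hlt q), hc, hzero, hlast, fun p i => ?_⟩
  constructor
  · rintro ⟨hi, hi'⟩
    exact le_antisymm (hblock (hle p) le_rfl hi') (hblock hi le_rfl (hlt p))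
  · rintro rfl
    exact ⟨hle p, hlt p⟩

lemma exists_hasDividers_of_monotone {κ : Fin n → Fin t} (hκ : Monotone κ) :
    ∃ c, HasDividers κ c := by
  have hlt (p : Fin n) (i : ℕ) : (p : ℕ) < #{q | (κ q : ℕ) < i} ↔ (κ p : ℕ) < i :=
    Tuple.lt_card_lt_iff_apply_lt_of_monotone (f := fun q => (κ q : ℕ)) hκ
  refine ⟨fun i => #{q | (κ q : ℕ) < i}, fun i j hij => ?_, by simp, by simp, fun p i => ?_⟩
  · exact card_le_card (monotone_filter_right _ fun q _ hq => hq.trans_le hij)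
  · rw [← not_lt, hlt, hlt, Fin.ext_iff, Fin.val_castSucc, Fin.val_succ]
    omega

lemma HasDividers.isGridding_iff {κ : Fin n → Fin t} {ϱ : Fin n → Fin u} {c : Fin (t + 1) → ℕ}
    {r : Fin (u + 1) → ℕ} (hκ : HasDividers κ c) (hϱ : HasDividers ϱ r)
    (M : Fin t → Fin u → ℤ) (σ : Equiv.Perm (Fin n)) :
    IsGridding M σ c r ↔ IsGriddedBy M κ ϱ σ := by
  obtain ⟨hc, hc0, hct, hκ⟩ := hκ
  obtain ⟨hr, hr0, hru, hϱ⟩ := hϱ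
  have hcell (i j p) : InCell σ c r i j p ↔ cellWord κ ϱ σ p = (i, j) := by
    rw [InCell, cellWord, Prod.mk.injEq, ← hκ, ← hϱ, and_assoc]
  simp only [IsGridding, hcell, hc, hc0, hct, hr, hr0, hru, true_and, IsGriddedBy,
    LetterwiseMonotone, cells, mem_filter, mem_univ]
  constructor
  · intro h
    refine ⟨fun p hp => (h _ _).1 hp p rfl, fun p q hpq hF => ⟨fun hs => ?_, fun hs => ?_⟩⟩
    · exact (h _ _).2.1 hs p q rfl hF.symm hpq
    · exact (h _ _).2.2 hs p q rfl hF.symm hpq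
  · rintro ⟨hne, hmono⟩ i j
    refine ⟨fun h0 p hp => ?_, fun hs p q hp hq hpq => ?_, fun hs p q hp hq hpq => ?_⟩
    · exact hne p (by rw [hp]; exact h0)
    · exact (hmono hpq (hp.trans hq.symm)).1 (by rw [hp]; exact hs)
    · exact (hmono hpq (hp.trans hq.symm)).2 (by rw [hp]; exact hs)

lemma inGridClass_iff (M : Fin t → Fin u → ℤ) (σ : Equiv.Perm (Fin n)) :
    InGridClass M σ ↔ ∃ κ ϱ, Monotone κ ∧ Monotone ϱ ∧ IsGriddedBy M κ ϱ σ := by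
  constructor
  · rintro ⟨c, r, h⟩
    obtain ⟨hc, hr, hc0, hct, hr0, hru, -⟩ := id h
    obtain ⟨κ, hκ, hκc⟩ := exists_monotone_hasDividers hc hc0 hct
    obtain ⟨ϱ, hϱ, hϱr⟩ := exists_monotone_hasDividers hr hr0 hru
    exact ⟨κ, ϱ, hκ, hϱ, (hκc.isGridding_iff hϱr M σ).mp h⟩
  · rintro ⟨κ, ϱ, hκ, hϱ, h⟩
    obtain ⟨c, hc⟩ := exists_hasDividers_of_monotone hκ
    obtain ⟨r, hr⟩ := exists_hasDividers_of_monotone hϱ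
    exact ⟨c, r, (hc.isGridding_iff hr M σ).mpr h⟩

lemma letterCount_injOn_monotone {α : Type*} [LinearOrder α] :
    Set.InjOn (letterCount (ι := Fin n) (α := α)) {κ | Monotone κ} := by
  intro κ hκ κ' hκ' h
  obtain ⟨σ, rfl⟩ := exists_comp_equiv_eq_of_letterCount_eq h
  exact Tuple.unique_monotone (τ := Equiv.refl _) hκ hκ'

lemma card_monotone_le {α : Type*} [Fintype α] [LinearOrder α] :
    #{κ : Fin n → α | Monotone κ} ≤ (n + 1) ^ Fintype.card α := by
  rw [← card_image_of_injOn (f := letterCount) (letterCount_injOn_monotone.mono (by simp))]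
  simpa using card_image_letterCount_le (ι := Fin n) {κ : Fin n → α | Monotone κ}

end Dividers

section UpperBound

open Finset

variable {ι α β : Type*} [Fintype ι] [LinearOrder ι] [Fintype α] [Fintype β] [DecidableEq α]
  [DecidableEq β] {M : α → β → ℤ} {κ : ι → α} {ϱ : ι → β} {A B : ι → α × β}

lemma card_filter_readingPairs_mul_le (hAB : (A, B) ∈ readingPairs M κ ϱ) :
    #{F ∈ readingPairs M κ ϱ | letterCount F.1 = letterCount A} *
        (∏ c, letterCount A c ^ letterCount A c) ^ 2 ≤
      ∏ c, (letterCount κ c.1 * letterCount ϱ c.2) ^ letterCount A c := by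
  obtain ⟨-, rfl, rfl, hcount⟩ := mem_readingPairs.mp hAB
  set P := ∏ c, letterCount A c ^ letterCount A c with hP
  set S : Finset (ι → α × β) := {F | Prod.fst ∘ F = Prod.fst ∘ A ∧ letterCount F = letterCount A}
  set T : Finset (ι → α × β) := {F | Prod.snd ∘ F = Prod.snd ∘ B ∧ letterCount F = letterCount B}
  have hsub : {F ∈ readingPairs M (Prod.fst ∘ A) (Prod.snd ∘ B) | letterCount F.1 = letterCount A} ⊆
      S ×ˢ T := fun ⟨F, F'⟩ hF => by
    obtain ⟨hF, hA⟩ := mem_filter.mp hF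
    obtain ⟨-, hfst, hsnd, hFF'⟩ := mem_readingPairs.mp hF
    simp [S, T, hfst, hsnd, ← hcount, ← hFF', hA]
  calc _ ≤ #(S ×ˢ T) * P ^ 2 := Nat.mul_le_mul_right _ (card_le_card hsub)
    _ = (#S * P) * (#T * P) := by rw [card_product]; ring
    _ ≤ (∏ c, letterCount (Prod.fst ∘ A) c.1 ^ letterCount A c) *
          ∏ c, letterCount (Prod.snd ∘ B) c.2 ^ letterCount A c := by
        refine Nat.mul_le_mul (card_filter_letterCount_eq_mul_prod_le Prod.fst A) ?_
        rw [hP, hcount]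
        exact card_filter_letterCount_eq_mul_prod_le Prod.snd B
    _ = _ := by simp only [← prod_mul_distrib, mul_pow]

variable {ρ : ℝ}
  (hρ : ∀ (x : α → ℝ) (y : β → ℝ),
    2 * ∑ c ∈ cells M, x c.1 * y c.2 ≤ ρ * (∑ i, x i ^ 2 + ∑ j, y j ^ 2))
include hρ

lemma prod_letterCount_pow_le (hAB : (A, B) ∈ readingPairs M κ ϱ) :
    (∏ c, ((letterCount κ c.1 : ℝ) * letterCount ϱ c.2) ^ letterCount A c) ≤
      (ρ ^ 2) ^ Fintype.card ι * (∏ c, (letterCount A c : ℝ) ^ letterCount A c) ^ 2 := by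
  set n := Fintype.card ι
  let z (c : α × β) : ℝ := √(letterCount κ c.1) * √(letterCount ϱ c.2)
  have hz (c) : 0 ≤ z c := by positivity
  have hsum : ∑ c ∈ cells M, z c ≤ ρ * n := by
    -- The squares of the test vector count the points by columns and by rows: they sum to `2 * n`.
    have h := hρ (fun i => √(letterCount κ i)) fun j => √(letterCount ϱ j)
    simp only [Real.sq_sqrt (Nat.cast_nonneg _), ← Nat.cast_sum, sum_letterCount] at h
    linarith
  have hprod :
      ∏ c, z c ^ letterCount A c ≤ ρ ^ n * ∏ c, (letterCount A c : ℝ) ^ letterCount A c := by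
    have amgm := prod_pow_mul_sum_pow_le (letterCount A) z hz
      fun c => mem_of_letterCount_ne_zero (mem_readingPairs.mp hAB).1
    rw [sum_letterCount] at amgm
    have hn : (0 : ℝ) < (n : ℝ) ^ n := by exact_mod_cast Nat.pow_self_pos
    refine le_of_mul_le_mul_right ?_ hn
    calc _ ≤ (∑ c ∈ cells M, z c) ^ n * ∏ c, (letterCount A c : ℝ) ^ letterCount A c := amgm
      _ ≤ (ρ * n) ^ n * ∏ c, (letterCount A c : ℝ) ^ letterCount A c := by
          gcongr
      _ = _ := by ring
  calc _ = (∏ c, z c ^ letterCount A c) ^ 2 := by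
        simp only [← prod_pow, z, mul_pow, pow_right_comm _ _ 2, Real.sq_sqrt (Nat.cast_nonneg _)]
    _ ≤ (ρ ^ n * ∏ c, (letterCount A c : ℝ) ^ letterCount A c) ^ 2 :=
        pow_le_pow_left₀ (prod_nonneg fun c _ => pow_nonneg (hz c) _) hprod 2
    _ = _ := by ring

lemma card_filter_readingPairs_le (hAB : (A, B) ∈ readingPairs M κ ϱ) :
    (#{F ∈ readingPairs M κ ϱ | letterCount F.1 = letterCount A} : ℝ) ≤
      (ρ ^ 2) ^ Fintype.card ι := by
  have hpos : (0 : ℝ) < ∏ c, (letterCount A c : ℝ) ^ letterCount A c :=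
    prod_pos fun c _ => by exact_mod_cast Nat.pow_self_pos
  refine le_of_mul_le_mul_right (le_trans ?_ (prod_letterCount_pow_le hρ hAB)) (pow_pos hpos 2)
  exact_mod_cast card_filter_readingPairs_mul_le hAB

lemma card_readingPairs_le (κ : ι → α) (ϱ : ι → β) :
    (#(readingPairs M κ ϱ) : ℝ) ≤
      (Fintype.card ι + 1 : ℝ) ^ (Fintype.card α * Fintype.card β) * (ρ ^ 2) ^ Fintype.card ι := by
  set T := (readingPairs M κ ϱ).image fun F => letterCount F.1
  have hT : #T ≤ (Fintype.card ι + 1) ^ (Fintype.card α * Fintype.card β) := by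
    have h := card_image_letterCount_le ((readingPairs M κ ϱ).image Prod.fst)
    rwa [image_image, Fintype.card_prod] at h
  calc (#(readingPairs M κ ϱ) : ℝ)
      = ∑ m ∈ T, (#{F ∈ readingPairs M κ ϱ | letterCount F.1 = m} : ℝ) := by
        exact_mod_cast card_eq_sum_card_image _ _
    _ ≤ ∑ m ∈ T, (ρ ^ 2) ^ Fintype.card ι := sum_le_sum fun m hm => by
        obtain ⟨⟨A, B⟩, hAB, rfl⟩ := mem_image.mp hm
        exact card_filter_readingPairs_le hρ hAB
    _ = #T * (ρ ^ 2) ^ Fintype.card ι := by rw [sum_const, nsmul_eq_mul]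
    _ ≤ _ := by
        gcongr
        exact_mod_cast hT

end UpperBound

section LowerBound

open Finset

variable {ι α β : Type*} [Fintype ι] [DecidableEq α] [DecidableEq β]

lemma prod_mul_prod_eq_of_letterCount_eq (x : α → ℝ) (y : β → ℝ) {F F' : ι → α × β}
    (h : letterCount F = letterCount F') :
    (∏ p, x (F p).1 * y (F p).2) * ∏ p, x (F' p).1 * y (F' p).2 =
      (∏ p, x (F p).1 ^ 2) * ∏ p, y (F' p).2 ^ 2 := by
  have hx := prod_comp_eq_of_letterCount_eq (fun c => x c.1) h
  have hy := prod_comp_eq_of_letterCount_eq (fun c => y c.2) h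
  simp only [prod_mul_distrib, prod_pow, hx, hy]
  ring

variable [LinearOrder ι] [Fintype α] [Fintype β]

lemma filter_pairs_eq_readingPairs (M : α → β → ℤ) (κ : ι → α) (ϱ : ι → β) :
    {F ∈ (Fintype.piFinset fun _ : ι => cells M) ×ˢ (Fintype.piFinset fun _ : ι => cells M) |
      letterCount F.1 = letterCount F.2 ∧ (Prod.fst ∘ F.1, Prod.snd ∘ F.2) = (κ, ϱ)} =
      readingPairs M κ ϱ := by
  ext ⟨F, F'⟩
  simp only [mem_filter, mem_product, Fintype.mem_piFinset, mem_readingPairs, Prod.mk.injEq]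
  constructor
  · rintro ⟨⟨hF, -⟩, hcount, hfst, hsnd⟩
    exact ⟨hF, hfst, hsnd, hcount⟩
  · rintro ⟨hF, hfst, hsnd, hcount⟩
    exact ⟨⟨hF, forall_mem_of_letterCount_eq hcount hF⟩, hcount, hfst, hsnd⟩

lemma sum_pairs_eq_sum_card_readingPairs_mul (M : α → β → ℤ) (x : α → ℝ) (y : β → ℝ) :
    ∑ F ∈ (Fintype.piFinset fun _ : ι => cells M) ×ˢ (Fintype.piFinset fun _ : ι => cells M) with
        letterCount F.1 = letterCount F.2,
      (∏ p, x (F.1 p).1 * y (F.1 p).2) * ∏ p, x (F.2 p).1 * y (F.2 p).2 =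
    ∑ κ : ι → α, ∑ ϱ : ι → β,
      #(readingPairs M κ ϱ) * ((∏ p, x (κ p) ^ 2) * ∏ p, y (ϱ p) ^ 2) := by
  rw [← sum_fiberwise _ fun F => (Prod.fst ∘ F.1, Prod.snd ∘ F.2), Fintype.sum_prod_type]
  refine sum_congr rfl fun κ _ => sum_congr rfl fun ϱ _ => ?_
  rw [filter_filter, filter_pairs_eq_readingPairs, ← nsmul_eq_mul, ← sum_const]
  refine sum_congr rfl fun F hF => ?_
  obtain ⟨-, rfl, rfl, hcount⟩ := mem_readingPairs.mp hF
  exact prod_mul_prod_eq_of_letterCount_eq x y hcount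

lemma sq_sum_cells_pow_le {M : α → β → ℤ} {G : ℕ}
    (hG : ∀ (κ : ι → α) (ϱ : ι → β), #(readingPairs M κ ϱ) ≤ G) (x : α → ℝ) (y : β → ℝ) :
    ((∑ c ∈ cells M, x c.1 * y c.2) ^ 2) ^ Fintype.card ι ≤
      (Fintype.card ι + 1 : ℝ) ^ (Fintype.card α * Fintype.card β) *
        (G * ((∑ i, x i ^ 2) * ∑ j, y j ^ 2) ^ Fintype.card ι) := by
  let W : Finset (ι → α × β) := Fintype.piFinset fun _ => cells M
  have himage : #(W.image letterCount) ≤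
      (Fintype.card ι + 1) ^ (Fintype.card α * Fintype.card β) := by
    simpa only [Fintype.card_prod] using card_image_letterCount_le W
  have hsum : ∑ κ : ι → α, ∑ ϱ : ι → β,
      #(readingPairs M κ ϱ) * ((∏ p, x (κ p) ^ 2) * ∏ p, y (ϱ p) ^ 2) ≤
        G * ((∑ i, x i ^ 2) * ∑ j, y j ^ 2) ^ Fintype.card ι := by
    rw [mul_pow, ← card_univ, ← prod_const, ← prod_const, prod_univ_sum, prod_univ_sum,
      Fintype.piFinset_univ, Fintype.piFinset_univ, sum_mul_sum, mul_sum]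
    simp_rw [mul_sum]
    refine sum_le_sum fun κ _ => sum_le_sum fun ϱ _ => ?_
    exact mul_le_mul_of_nonneg_right (mod_cast hG κ ϱ) (by positivity)
  calc ((∑ c ∈ cells M, x c.1 * y c.2) ^ 2) ^ Fintype.card ι
      = (∑ F ∈ W, ∏ p, x (F p).1 * y (F p).2) ^ 2 := by
        rw [pow_right_comm, ← card_univ, ← prod_const, prod_univ_sum]
    _ ≤ #(W.image letterCount) * ∑ κ : ι → α, ∑ ϱ : ι → β,
          #(readingPairs M κ ϱ) * ((∏ p, x (κ p) ^ 2) * ∏ p, y (ϱ p) ^ 2) := by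
        rw [← sum_pairs_eq_sum_card_readingPairs_mul]
        exact sq_sum_le_card_image_mul_sum W letterCount _
    _ ≤ _ := by
        gcongr
        exact_mod_cast himage

end LowerBound

section GridCount

open Finset

variable {t u : ℕ} {M : Fin t → Fin u → ℤ} (hM : ∀ i j, M i j = 0 ∨ M i j = 1 ∨ M i j = -1)
include hM

lemma gridCount_le_sum_card_readingPairs (n : ℕ) :
    gridCount M n ≤ ∑ κ : Fin n → Fin t with Monotone κ, ∑ ϱ : Fin n → Fin u with Monotone ϱ,
      #(readingPairs M κ ϱ) := by
  simp only [← card_isGriddedBy hM]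
  rw [gridCount, Nat.card_eq_fintype_card, Fintype.card_subtype, ← sum_product']
  refine (card_le_card fun σ hσ => ?_).trans card_biUnion_le
  obtain ⟨κ, ϱ, hκ, hϱ, h⟩ := (inGridClass_iff M σ).mp (mem_filter.mp hσ).2
  simp only [mem_biUnion, mem_product, mem_filter, mem_univ, true_and]
  exact ⟨(κ, ϱ), ⟨hκ, hϱ⟩, h⟩

lemma card_readingPairs_le_gridCount {n : ℕ} (κ : Fin n → Fin t) (ϱ : Fin n → Fin u) :
    #(readingPairs M κ ϱ) ≤ gridCount M n := by
  rw [← card_readingPairs_comp_equiv M κ ϱ (Tuple.sort κ) (Tuple.sort ϱ), ← card_isGriddedBy hM,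
    gridCount, Nat.card_eq_fintype_card, Fintype.card_subtype]
  refine card_le_card (monotone_filter_right _ fun σ _ hσ => ?_)
  exact (inGridClass_iff M σ).mpr ⟨_, _, Tuple.monotone_sort κ, Tuple.monotone_sort ϱ, hσ⟩

lemma gridCount_le {ρ : ℝ} (hρ : ∀ (x : Fin t → ℝ) (y : Fin u → ℝ),
    2 * ∑ c ∈ cells M, x c.1 * y c.2 ≤ ρ * (∑ i, x i ^ 2 + ∑ j, y j ^ 2)) (n : ℕ) :
    (gridCount M n : ℝ) ≤ (n + 1 : ℝ) ^ (t + u + t * u) * (ρ ^ 2) ^ n := by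
  calc (gridCount M n : ℝ)
      ≤ ∑ κ : Fin n → Fin t with Monotone κ, ∑ ϱ : Fin n → Fin u with Monotone ϱ,
          (#(readingPairs M κ ϱ) : ℝ) := by
        exact_mod_cast gridCount_le_sum_card_readingPairs hM n
    _ ≤ ∑ κ : Fin n → Fin t with Monotone κ, ∑ ϱ : Fin n → Fin u with Monotone ϱ,
          (n + 1 : ℝ) ^ (t * u) * (ρ ^ 2) ^ n := by
        gcongr with κ _ ϱ _
        simpa using card_readingPairs_le hρ κ ϱ
    _ = #{κ : Fin n → Fin t | Monotone κ} * #{ϱ : Fin n → Fin u | Monotone ϱ} *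
          ((n + 1 : ℝ) ^ (t * u) * (ρ ^ 2) ^ n) := by
        simp only [sum_const, nsmul_eq_mul, mul_assoc]
    _ ≤ (n + 1) ^ t * (n + 1) ^ u * ((n + 1 : ℝ) ^ (t * u) * (ρ ^ 2) ^ n) := by
        have hcols := card_monotone_le (n := n) (α := Fin t)
        have hrows := card_monotone_le (n := n) (α := Fin u)
        rw [Fintype.card_fin] at hcols hrows
        gcongr
        · exact_mod_cast hcols
        · exact_mod_cast hrows
    _ = _ := by ring

lemma sq_pow_le_mul_gridCount {ρ : ℝ} (hρ : 0 ≤ ρ) {x : Fin t → ℝ} {y : Fin u → ℝ}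
    (hpos : 0 < ∑ i, x i ^ 2 + ∑ j, y j ^ 2)
    (hxy : ρ * (∑ i, x i ^ 2 + ∑ j, y j ^ 2) ≤ 2 * ∑ c ∈ cells M, x c.1 * y c.2) {n : ℕ}
    (hn : n ≠ 0) : (ρ ^ 2) ^ n ≤ (n + 1 : ℝ) ^ (t * u) * gridCount M n := by
  rcases hρ.eq_or_lt with rfl | hρpos
  · rw [zero_pow two_ne_zero, zero_pow hn]
    positivity
  have hbound := sq_sum_cells_pow_le (card_readingPairs_le_gridCount hM (n := n)) x y
  simp only [Fintype.card_fin] at hbound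
  set K := ∑ c ∈ cells M, x c.1 * y c.2
  set S := ∑ i, x i ^ 2
  set T := ∑ j, y j ^ 2
  have hK : 0 < K := by linarith [mul_pos hρpos hpos]
  have hKST : ρ ^ 2 * (S * T) ≤ K ^ 2 := by
    have hsq : (ρ * (S + T)) ^ 2 ≤ (2 * K) ^ 2 := by gcongr
    nlinarith [mul_nonneg (sq_nonneg ρ) (sq_nonneg (S - T))]
  have hST : 0 < (S * T) ^ n := by
    have hST0 : 0 ≤ (S * T) ^ n := by positivity
    refine hST0.lt_of_ne fun h0 => ?_
    rw [← h0, mul_zero, mul_zero] at hbound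
    exact hbound.not_gt (by positivity)
  refine le_of_mul_le_mul_right ?_ hST
  calc (ρ ^ 2) ^ n * (S * T) ^ n = (ρ ^ 2 * (S * T)) ^ n := (mul_pow _ _ _).symm
    _ ≤ (K ^ 2) ^ n := by gcongr
    _ ≤ (n + 1 : ℝ) ^ (t * u) * gridCount M n * (S * T) ^ n := by rwa [mul_assoc]

end GridCount

section SpectralRadius

open Matrix
open scoped MatrixOrder

variable {V : Type*} [Fintype V]

lemma graphAdjMatrix_isHermitian (G : SimpleGraph V) : (graphAdjMatrix G).IsHermitian := by
  ext a b
  simp [graphAdjMatrix, G.adj_comm]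

variable [DecidableEq V]

lemma dotProduct_mulVec_le_sSup_spectrum {B : Matrix V V ℝ} (hB : B.IsHermitian) (v : V → ℝ) :
    v ⬝ᵥ B *ᵥ v ≤ sSup (spectrum ℝ B) * (v ⬝ᵥ v) := by
  have hle : B ≤ algebraMap ℝ _ (sSup (spectrum ℝ B)) :=
    le_algebraMap_of_spectrum_le (fun _ h => le_csSup B.finite_spectrum.bddAbove h) hB
  have h := (Matrix.le_iff.mp hle).dotProduct_mulVec_nonneg v
  rwa [star_trivial, sub_mulVec, dotProduct_sub, Algebra.algebraMap_eq_smul_one, smul_mulVec,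
    one_mulVec, dotProduct_smul, smul_eq_mul, sub_nonneg] at h

lemma exists_mulVec_eq_sSup_spectrum_smul [Nonempty V] {B : Matrix V V ℝ} (hB : B.IsHermitian) :
    ∃ v ≠ 0, B *ᵥ v = sSup (spectrum ℝ B) • v := by
  have hne : (spectrum ℝ B).Nonempty :=
    hB.spectrum_real_eq_range_eigenvalues ▸ Set.range_nonempty _
  have hmem := hne.csSup_mem B.finite_spectrum
  rw [hB.spectrum_real_eq_range_eigenvalues] at hmem
  obtain ⟨i, hi⟩ := hmem
  refine ⟨hB.eigenvectorBasis i, ?_, ?_⟩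
  · exact fun h => hB.eigenvectorBasis.orthonormal.ne_zero i (by ext a; exact congrFun h a)
  · rw [hB.mulVec_eigenvectorBasis, hi, hB.spectrum_real_eq_range_eigenvalues]

lemma graphSpectralRadius_eq_sSup_spectrum (G : SimpleGraph V) :
    graphSpectralRadius G = sSup (spectrum ℝ (graphAdjMatrix G)) := by
  simp only [graphSpectralRadius, ← mem_spectrum_iff_isRoot_charpoly, Set.ofPred_mem_eq]

lemma graphSpectralRadius_nonneg [Nonempty V] (G : SimpleGraph V) : 0 ≤ graphSpectralRadius G := by
  have h := dotProduct_mulVec_le_sSup_spectrum (graphAdjMatrix_isHermitian G) 1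
  rw [← graphSpectralRadius_eq_sSup_spectrum, one_dotProduct_one] at h
  refine nonneg_of_mul_nonneg_left (le_trans ?_ h) (Nat.cast_pos.mpr Fintype.card_pos)
  refine dotProduct_nonneg_of_nonneg zero_le_one fun a => Finset.sum_nonneg fun b _ => ?_
  simp only [graphAdjMatrix, of_apply, Pi.one_apply, mul_one]
  split_ifs <;> simp

variable {t u : ℕ} (M : Fin t → Fin u → ℤ)

lemma dotProduct_graphAdjMatrix_rowColGraph_mulVec (x : Fin t → ℝ) (y : Fin u → ℝ) :
    Sum.elim x y ⬝ᵥ graphAdjMatrix (rowColGraph M) *ᵥ Sum.elim x y =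
      2 * ∑ c ∈ cells M, x c.1 * y c.2 := by
  have hcells : ∑ c ∈ cells M, x c.1 * y c.2 = ∑ i, ∑ j, if M i j ≠ 0 then x i * y j else 0 := by
    simp only [cells, Finset.sum_filter, Fintype.sum_prod_type]
  have hrow (i : Fin t) :
      ∑ b, graphAdjMatrix (rowColGraph M) (Sum.inl i) b * Sum.elim x y b =
        ∑ j, if M i j ≠ 0 then y j else 0 := by
    simp [graphAdjMatrix, rowColGraph]
  have hcol (j : Fin u) :
      ∑ b, graphAdjMatrix (rowColGraph M) (Sum.inr j) b * Sum.elim x y b =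
        ∑ i, if M i j ≠ 0 then x i else 0 := by
    simp [graphAdjMatrix, rowColGraph]
  rw [two_mul, dotProduct, Fintype.sum_sum_type]
  simp only [mulVec, dotProduct, Sum.elim_inl, Sum.elim_inr, hrow, hcol, Finset.mul_sum, mul_ite,
    mul_zero, hcells]
  rw [Finset.sum_comm (γ := Fin u)]
  simp only [mul_comm]

lemma two_mul_sum_cells_le (x : Fin t → ℝ) (y : Fin u → ℝ) :
    2 * ∑ c ∈ cells M, x c.1 * y c.2 ≤
      graphSpectralRadius (rowColGraph M) * (∑ i, x i ^ 2 + ∑ j, y j ^ 2) := by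
  have h := dotProduct_mulVec_le_sSup_spectrum (graphAdjMatrix_isHermitian (rowColGraph M))
    (Sum.elim x y)
  rw [dotProduct_graphAdjMatrix_rowColGraph_mulVec] at h
  simpa [graphSpectralRadius_eq_sSup_spectrum, dotProduct, sq] using h

lemma exists_two_mul_sum_cells_eq [Nonempty (Fin t ⊕ Fin u)] :
    ∃ (x : Fin t → ℝ) (y : Fin u → ℝ), 0 < ∑ i, x i ^ 2 + ∑ j, y j ^ 2 ∧
      2 * ∑ c ∈ cells M, x c.1 * y c.2 =
        graphSpectralRadius (rowColGraph M) * (∑ i, x i ^ 2 + ∑ j, y j ^ 2) := by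
  obtain ⟨v, hv0, hv⟩ :=
    exists_mulVec_eq_sSup_spectrum_smul (graphAdjMatrix_isHermitian (rowColGraph M))
  obtain ⟨x, y, rfl⟩ : ∃ x y, v = Sum.elim x y := ⟨_, _, (Sum.elim_comp_inl_inr v).symm⟩
  have hnorm : Sum.elim x y ⬝ᵥ Sum.elim x y = ∑ i, x i ^ 2 + ∑ j, y j ^ 2 := by
    simp [dotProduct, sq]
  refine ⟨x, y, ?_, ?_⟩
  · rw [← hnorm]
    exact (dotProduct_self_star_pos_iff (v := Sum.elim x y)).mpr hv0
  · rw [← dotProduct_graphAdjMatrix_rowColGraph_mulVec, hv, dotProduct_smul, hnorm, smul_eq_mul,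
      graphSpectralRadius_eq_sSup_spectrum]

end SpectralRadius

section Limit

lemma tendsto_add_one_pow_rpow_one_div (K : ℕ) :
    Tendsto (fun n : ℕ => (((n : ℝ) + 1) ^ K) ^ (1 / (n : ℝ))) atTop (nhds 1) := by
  have h := (tendsto_rpow_div_mul_add K 1 (-1) zero_ne_one).comp
    (tendsto_atTop_add_const_right _ 1 (tendsto_natCast_atTop_atTop (R := ℝ)))
  refine h.congr fun n => ?_
  rw [Function.comp_apply, ← Real.rpow_natCast_mul (by positivity)]
  ring_nf

lemma tendsto_rpow_one_div_of_pow_le_of_le_pow {a : ℕ → ℝ} {c : ℝ} (hc : 0 ≤ c) {K L : ℕ}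
    (hlower : ∀ᶠ n : ℕ in atTop, c ^ n ≤ ((n : ℝ) + 1) ^ K * a n)
    (hupper : ∀ᶠ n : ℕ in atTop, a n ≤ ((n : ℝ) + 1) ^ L * c ^ n) :
    Tendsto (fun n : ℕ => a n ^ (1 / (n : ℝ))) atTop (nhds c) := by
  have hroot {n : ℕ} (hn : n ≠ 0) : (c ^ n) ^ (1 / (n : ℝ)) = c := by
    rw [one_div, Real.pow_rpow_inv_natCast hc hn]
  refine tendsto_of_tendsto_of_tendsto_of_le_of_le'
    (g := fun n : ℕ => c / (((n : ℝ) + 1) ^ K) ^ (1 / (n : ℝ)))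
    (h := fun n : ℕ => (((n : ℝ) + 1) ^ L) ^ (1 / (n : ℝ)) * c) ?_ ?_ ?_ ?_
  · simpa [Pi.div_def] using tendsto_const_nhds.div (tendsto_add_one_pow_rpow_one_div K) one_ne_zero
  · simpa using (tendsto_add_one_pow_rpow_one_div L).mul_const c
  · filter_upwards [hlower, eventually_ne_atTop 0] with n hn hn0
    have hpos : (0 : ℝ) < ((n : ℝ) + 1) ^ K := by positivity
    have ha : 0 ≤ a n := nonneg_of_mul_nonneg_right ((pow_nonneg hc n).trans hn) hpos
    rw [div_le_iff₀' (by positivity), ← Real.mul_rpow hpos.le ha]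
    exact (hroot hn0).symm.trans_le (Real.rpow_le_rpow (by positivity) hn (by positivity))
  · filter_upwards [hlower, hupper, eventually_ne_atTop 0] with n hn hn' hn0
    have hpos : (0 : ℝ) < ((n : ℝ) + 1) ^ K := by positivity
    have ha : 0 ≤ a n := nonneg_of_mul_nonneg_right ((pow_nonneg hc n).trans hn) hpos
    conv_rhs => rw [← hroot hn0, ← Real.mul_rpow (by positivity) (by positivity)]
    exact Real.rpow_le_rpow ha hn' (by positivity)

end Limit

/-- The growth rate of a monotone grid class exists and equals the square of the spectral
radius of its row-column graph. -/
theorem grid_growth_rate_eq_sq_spectralRadius {t u : ℕ} (ht : 1 ≤ t) (hu : 1 ≤ u)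
    (M : Fin t → Fin u → ℤ) (hM : ∀ i j, M i j = 0 ∨ M i j = 1 ∨ M i j = -1) :
    Tendsto (fun n : ℕ => (gridCount M n : ℝ) ^ (1 / (n : ℝ))) atTop
      (nhds (graphSpectralRadius (rowColGraph M) ^ 2)) := by
  have : Nonempty (Fin t ⊕ Fin u) := ⟨Sum.inl ⟨0, ht⟩⟩
  obtain ⟨x, y, hpos, hxy⟩ := exists_two_mul_sum_cells_eq M
  refine tendsto_rpow_one_div_of_pow_le_of_le_pow (sq_nonneg _) (K := t * u)
    (L := t + u + t * u) ?lower ?upper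
  case lower =>
    filter_upwards [eventually_ne_atTop 0] with n hn
    exact sq_pow_le_mul_gridCount hM (graphSpectralRadius_nonneg _) hpos hxy.ge hn
  case upper =>
    exact .of_forall (gridCount_le hM (two_mul_sum_cells_le M))
end
end

section
/- Let M be a matrix with t ≥ 1 columns and u ≥ 1 rows and entries in {0, 1, −1}. Then the growth rate gr(Grid(M)) = lim_{n→∞} |Grid_n(M)|^{1/n} (which exists) is an algebraic integer: there is a monic polynomial with integer coefficients having gr(Grid(M)) as a root. -/
noncomputable section

open Filter

open scoped Classical

/-!
Let `S` be the `0`/`1` matrix of nonzero entries of `M`; the growth rate is the largest eigenvalue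
`γ` of the integer matrix `S Sᵀ`, which is a root of its characteristic polynomial.

Once the dividers are fixed, which can be done in polynomially many ways, a gridded permutation `σ`
is determined by the row of the entry at each position and the column of each value. These are two
words, and any two words giving the same number of points to each nonzero cell, and none to the
zero cells, arise.

*Upper bound.* For `m > γ` there is a strictly positive `x` with `S Sᵀ x ≤ m x`. Weight the columns
by `x` and the rows by `y = Sᵀ x`. All gridded permutations of length `n` with the given dividers
get the same weight, and the weights of all pairs of words whose letters meet only nonzero cells add
up to at most `m ^ n` times that weight.

*Lower bound.* If `x` is a nonnegative `γ`-eigenvector and `y = Sᵀ x`, distribute the points among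
the cells in proportion to `x i * S i j * y j`. By Stirling's formula the resulting product of
multinomial coefficients grows like `γ ^ n`.
-/

section NonnegativeMatrix

open Matrix

theorem isIntegral_of_map_mulVec_eq_smul {V R K : Type*} [Fintype V] [CommRing R] [CommRing K]
    [IsDomain K] [Algebra R K] {N : Matrix V V R} {v : V → K} {l : K} (hv : v ≠ 0)
    (h : N.map (algebraMap R K) *ᵥ v = l • v) : IsIntegral R l := by
  have hker : (scalar V l - N.map (algebraMap R K)) *ᵥ v = 0 := by
    rw [sub_mulVec, h, scalar_apply, ← smul_one_eq_diagonal, smul_mulVec, one_mulVec, sub_self]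
  have hdet : (scalar V l - N.map (algebraMap R K)).det = 0 :=
    exists_mulVec_eq_zero_iff.1 ⟨v, hv, hker⟩
  refine ⟨N.charpoly, N.charpoly_monic, ?_⟩
  rw [← Polynomial.eval_map, ← charpoly_map, eval_charpoly, hdet]

theorem mulVec_nonneg_of_nonneg {V W R : Type*} [Fintype W] [Semiring R] [PartialOrder R]
    [IsOrderedRing R] {A : Matrix V W R} (hA : ∀ i j, 0 ≤ A i j) {x : W → R} (hx : 0 ≤ x) :
    0 ≤ A *ᵥ x :=
  fun i => Finset.sum_nonneg fun j _ => mul_nonneg (hA i j) (hx j)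

variable {V : Type*} [Fintype V] {A : Matrix V V ℝ}

theorem exists_eigenvector_posSemidef_smul_one_sub [DecidableEq V] [Nonempty V]
    (hA : A.IsHermitian) :
    ∃ (l : ℝ) (v : V → ℝ), v ≠ 0 ∧ A *ᵥ v = l • v ∧ (l • 1 - A).PosSemidef := by
  obtain ⟨i, hi⟩ := Finite.exists_max hA.eigenvalues
  refine ⟨hA.eigenvalues i, hA.eigenvectorBasis i, ?_, hA.mulVec_eigenvectorBasis i, ?_⟩
  · simpa using hA.eigenvectorBasis.orthonormal.ne_zero i
  · rw [posSemidef_iff_isHermitian_and_spectrum_nonneg, ← Algebra.algebraMap_eq_smul_one]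
    refine ⟨(isHermitian_diagonal _).sub hA, ?_⟩
    rw [← spectrum.singleton_sub_eq, hA.spectrum_real_eq_range_eigenvalues]
    rintro _ ⟨_, rfl, _, ⟨j, rfl⟩, rfl⟩
    exact sub_nonneg.2 (hi j)

theorem dotProduct_mulVec_le_of_posSemidef [DecidableEq V] {l : ℝ} (hl : (l • 1 - A).PosSemidef)
    (z : V → ℝ) : z ⬝ᵥ A *ᵥ z ≤ l * (z ⬝ᵥ z) := by
  have := hl.dotProduct_mulVec_nonneg z
  rw [star_trivial, sub_mulVec, smul_mulVec, one_mulVec, dotProduct_sub, dotProduct_smul] at this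
  simpa using this

/-- Taking absolute values of the entries can only increase the Rayleigh quotient, so it keeps a
maximiser a maximiser. -/
theorem mulVec_abs_eq_smul_abs [DecidableEq V] (hA : ∀ i j, 0 ≤ A i j) {l : ℝ}
    (hl : (l • 1 - A).PosSemidef) {v : V → ℝ} (hv : A *ᵥ v = l • v) : A *ᵥ |v| = l • |v| := by
  have hform (z : V → ℝ) : z ⬝ᵥ (l • 1 - A) *ᵥ z = l * (z ⬝ᵥ z) - z ⬝ᵥ A *ᵥ z := by
    rw [sub_mulVec, smul_mulVec, one_mulVec, dotProduct_sub, dotProduct_smul, smul_eq_mul]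
  have hle : v ⬝ᵥ A *ᵥ v ≤ |v| ⬝ᵥ A *ᵥ |v| := by
    simp only [dotProduct, mulVec, Finset.mul_sum]
    refine Finset.sum_le_sum fun i _ => Finset.sum_le_sum fun j _ => (le_abs_self _).trans ?_
    rw [abs_mul, abs_mul, abs_of_nonneg (hA i j), Pi.abs_apply, Pi.abs_apply]
  have habs : |v| ⬝ᵥ |v| = v ⬝ᵥ v := by simp [dotProduct]
  have hzero : |v| ⬝ᵥ (l • 1 - A) *ᵥ |v| = 0 := by
    refine le_antisymm ?_ (by simpa using hl.dotProduct_mulVec_nonneg |v|)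
    rw [hv, dotProduct_smul, smul_eq_mul] at hle
    rw [hform, habs]
    exact sub_nonpos.2 hle
  have hker := (hl.dotProduct_mulVec_zero_iff |v|).1 (by rwa [star_trivial])
  rw [sub_mulVec, smul_mulVec, one_mulVec, sub_eq_zero] at hker
  exact hker.symm

theorem exists_nonneg_eigenvector_posSemidef_smul_one_sub [DecidableEq V] [Nonempty V]
    (hA : A.IsHermitian) (hA₀ : ∀ i j, 0 ≤ A i j) :
    ∃ (l : ℝ) (v : V → ℝ),
      0 ≤ l ∧ 0 ≤ v ∧ v ≠ 0 ∧ A *ᵥ v = l • v ∧ (l • 1 - A).PosSemidef := by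
  obtain ⟨l, v, hv, hAv, hl⟩ := exists_eigenvector_posSemidef_smul_one_sub hA
  have hA_abs : A *ᵥ |v| = l • |v| := mulVec_abs_eq_smul_abs hA₀ hl hAv
  refine ⟨l, |v|, ?_, abs_nonneg v, by simpa using hv, hA_abs, hl⟩
  obtain ⟨i, hi⟩ := Function.ne_iff.1 hv
  have hnonneg := mulVec_nonneg_of_nonneg hA₀ (abs_nonneg v) i
  rw [hA_abs] at hnonneg
  exact nonneg_of_mul_nonneg_left hnonneg (abs_pos.2 hi)

/-- Rayleigh quotient of `A + ε J` at an eigenvector, `J` being the all-ones matrix. -/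
theorem eigenvalue_add_const_le [DecidableEq V] {l l' ε : ℝ} (hε : 0 ≤ ε)
    (hl : (l • 1 - A).PosSemidef) {z : V → ℝ} (hz : z ≠ 0)
    (hAz : (A + of fun _ _ => ε) *ᵥ z = l' • z) : l' ≤ l + ε * Fintype.card V := by
  refine le_of_mul_le_mul_right ?_ (dotProduct_self_star_pos_iff.2 hz)
  have hsq : (∑ i, z i) ^ 2 ≤ Fintype.card V * (z ⬝ᵥ z) := by
    simpa [dotProduct, sq] using sq_sum_le_card_mul_sum_sq (s := Finset.univ) (f := z)
  calc l' * (z ⬝ᵥ z) = z ⬝ᵥ A *ᵥ z + ε * (∑ i, z i) ^ 2 := by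
        rw [← smul_eq_mul, ← dotProduct_smul, ← hAz, add_mulVec, dotProduct_add]
        simp only [mulVec, dotProduct, of_apply, ← Finset.mul_sum, ← Finset.sum_mul]
        ring
    _ ≤ l * (z ⬝ᵥ z) + ε * (Fintype.card V * (z ⬝ᵥ z)) := by
        gcongr
        exact dotProduct_mulVec_le_of_posSemidef hl z
    _ = (l + ε * Fintype.card V) * (z ⬝ᵥ z) := by ring

/-- A Perron eigenvector of the slightly larger, entrywise positive matrix `A + ε J` is strictly
positive, and its eigenvalue exceeds `l` by at most `ε |V|`. -/
theorem exists_pos_mulVec_le_smul [DecidableEq V] [Nonempty V] (hA₀ : ∀ i j, 0 ≤ A i j) {l m : ℝ}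
    (hl : (l • 1 - A).PosSemidef) (hlm : l < m) :
    ∃ z : V → ℝ, (∀ i, 0 < z i) ∧ A *ᵥ z ≤ m • z := by
  have hA : A.IsHermitian := by
    rw [← sub_sub_cancel (l • (1 : Matrix V V ℝ)) A]
    exact (isHermitian_one.smul (IsSelfAdjoint.all l)).sub hl.isHermitian
  have hcard : (0 : ℝ) < Fintype.card V := Nat.cast_pos.2 Fintype.card_pos
  obtain ⟨ε, hε₀, hε⟩ : ∃ ε, 0 < ε ∧ l + ε * Fintype.card V = m :=
    ⟨(m - l) / Fintype.card V, div_pos (sub_pos.2 hlm) hcard, by field_simp; ring⟩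
  obtain ⟨l', z, -, hz₀, hz, hAz, -⟩ := exists_nonneg_eigenvector_posSemidef_smul_one_sub
    (A := A + of fun _ _ => ε) (hA.add (IsHermitian.ext fun _ _ => rfl))
    fun i j => add_nonneg (hA₀ i j) hε₀.le
  have hle : l' ≤ m := hε ▸ eigenvalue_add_const_le hε₀.le hl hz hAz
  have hsum : 0 < ε * ∑ i, z i := by
    obtain ⟨i, hi⟩ := Function.ne_iff.1 hz
    exact mul_pos hε₀
      (Finset.sum_pos' (fun i _ => hz₀ i) ⟨i, Finset.mem_univ i, (hz₀ i).lt_of_ne' hi⟩)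
  have hAz_nonneg : 0 ≤ A *ᵥ z := mulVec_nonneg_of_nonneg hA₀ hz₀
  have hAz_apply (i : V) : (A *ᵥ z) i + ε * ∑ i, z i = l' * z i := by
    refine Eq.trans ?_ (congrFun hAz i)
    simp [mulVec, dotProduct, add_mul, Finset.sum_add_distrib, Finset.mul_sum]
  refine ⟨z, fun i => (hz₀ i).lt_of_ne fun h => ?_, fun i => ?_⟩
  · have := hAz_apply i
    rw [← h, Pi.zero_apply, mul_zero] at this
    exact (add_pos_of_nonneg_of_pos (hAz_nonneg i) hsum).ne' this
  · calc (A *ᵥ z) i ≤ l' * z i := by linarith [hAz_apply i]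
      _ ≤ m * z i := mul_le_mul_of_nonneg_right hle (hz₀ i)

end NonnegativeMatrix

section Words

open scoped Nat

variable {α ι κ : Type*} [Finite α] [Fintype ι] [Fintype κ]

/-- The words over `κ`, with letters indexed by `α`, in which each letter `j` occurs `a j` times. -/
def wordsOfContent (α : Type*) (a : κ → ℕ) : Set (α → κ) :=
  {f | ∀ j, Nat.card {p // f p = j} = a j}

/-- The words over `κ` in which, among the places labelled `i` by `col`, each letter `j` occurs
`a i j` times. -/
def wordsOfJointContent (col : α → ι) (a : ι → κ → ℕ) : Set (α → κ) :=
  {f | ∀ i j, Nat.card {p // col p = i ∧ f p = j} = a i j}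

theorem natCard_equiv {α β : Type*} [Finite α] (e : α ≃ β) :
    Nat.card (α ≃ β) = (Nat.card α)! := by
  rw [Nat.card_congr (Equiv.equivCongr (Equiv.refl α) e.symm), Nat.card_perm]

/-- Every bijection of `α` with the disjoint union of the blocks `Fin (a j)` comes from a word of
content `a` and a numbering of the occurrences of each letter. -/
theorem factorial_card_le_card_wordsOfContent_mul {a : κ → ℕ} (ha : Nat.card α = ∑ j, a j) :
    (Nat.card α)! ≤ Nat.card (wordsOfContent α a) * ∏ j, (a j)! := by
  have hblocks : Nat.card (α ≃ Σ j, Fin (a j)) = (Nat.card α)! :=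
    natCard_equiv (Finite.card_eq.1 (by simp [ha])).some
  let Y := Σ f : wordsOfContent α a, ∀ j, {p // f.1 p = j} ≃ Fin (a j)
  have hY : Nat.card Y = Nat.card (wordsOfContent α a) * ∏ j, (a j)! := by
    have hfib (f : wordsOfContent α a) :
        Nat.card (∀ j, {p // f.1 p = j} ≃ Fin (a j)) = ∏ j, (a j)! := by
      rw [Nat.card_pi]
      refine Finset.prod_congr rfl fun j _ => ?_
      rw [natCard_equiv (Finite.equivFinOfCardEq (f.2 j)), f.2 j]
    have := Fintype.ofFinite (wordsOfContent α a)
    simp only [Y, Nat.card_sigma, hfib, Finset.sum_const, Finset.card_univ, smul_eq_mul,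
      Nat.card_eq_fintype_card]
  rw [← hblocks, ← hY]
  refine Nat.card_le_card_of_surjective (fun y : Y =>
    (Equiv.sigmaFiberEquiv y.1.1).symm.trans (Equiv.sigmaCongrRight y.2)) fun e => ?_
  let fiber (j : κ) : {p // (e p).1 = j} ≃ Fin (a j) :=
    (e.subtypeEquiv fun _ => Iff.rfl).trans (Equiv.sigmaSubtype j)
  exact ⟨⟨⟨fun p => (e p).1, fun j => by simp [Nat.card_congr (fiber j)]⟩, fiber⟩, rfl⟩

theorem prod_factorial_le_card_wordsOfJointContent_mul {col : α → ι} {a : ι → κ → ℕ}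
    (ha : ∀ i, Nat.card {p // col p = i} = ∑ j, a i j) :
    ∏ i, (∑ j, a i j)! ≤ Nat.card (wordsOfJointContent col a) * ∏ i, ∏ j, (a i j)! := by
  have hjoin : Nat.card (∀ i, wordsOfContent {p // col p = i} (a i)) ≤
      Nat.card (wordsOfJointContent col a) := by
    refine Nat.card_le_card_of_injective
      (fun g => ⟨fun p => (g (col p)).1 ⟨p, rfl⟩, fun i j => ?_⟩) fun g g' h => ?_
    · rw [← (g i).2 j, Nat.card_congr (Equiv.subtypeSubtypeEquivSubtypeExists _ _)]
      refine Nat.card_congr (Equiv.subtypeEquivRight fun p => ⟨?_, ?_⟩)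
      · rintro ⟨rfl, hp⟩
        exact ⟨rfl, hp⟩
      · rintro ⟨rfl, hp⟩
        exact ⟨rfl, hp⟩
    · ext i ⟨p, rfl⟩
      exact congrFun (congrArg Subtype.val h) p
  calc ∏ i, (∑ j, a i j)!
      ≤ ∏ i, (Nat.card (wordsOfContent {p // col p = i} (a i)) * ∏ j, (a i j)!) :=
        Finset.prod_le_prod' fun i _ => ha i ▸ factorial_card_le_card_wordsOfContent_mul (ha i)
    _ = Nat.card (∀ i, wordsOfContent {p // col p = i} (a i)) * ∏ i, ∏ j, (a i j)! := by
        rw [Finset.prod_mul_distrib, Nat.card_pi]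
    _ ≤ _ := Nat.mul_le_mul_right _ hjoin

end Words

section CellLabels

variable {α β ι κ : Type*}

/-- The bijection `σ`, with positions labelled by columns through `col` and values labelled by rows
through `row`, is increasing on the cells where `M` is `1`, decreasing on those where `M` is `-1`,
and has no points in those where `M` is `0`. -/
def IsMonotoneOnCells [LT α] [LT β] (M : ι → κ → ℤ) (col : α → ι) (row : β → κ) (σ : α ≃ β) :
    Prop :=
  (∀ p, M (col p) (row (σ p)) ≠ 0) ∧
    ∀ p q, col p = col q → row (σ p) = row (σ q) → p < q →
      (M (col p) (row (σ p)) = 1 → σ p < σ q) ∧ (M (col p) (row (σ p)) = -1 → σ q < σ p)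

/-- The `0`/`1` matrix marking the nonzero entries of `M`. -/
def supportMatrix (R : Type*) [Zero R] [One R] (M : ι → κ → ℤ) : Matrix ι κ R :=
  Matrix.of fun i j => if M i j = 0 then 0 else 1

theorem supportMatrix_nonneg (M : ι → κ → ℤ) (i : ι) (j : κ) : 0 ≤ supportMatrix ℝ M i j := by
  simp only [supportMatrix, Matrix.of_apply]
  positivity

theorem map_supportMatrix {R R' : Type*} [NonAssocSemiring R] [NonAssocSemiring R'] (f : R →+* R')
    (M : ι → κ → ℤ) : (supportMatrix R M).map f = supportMatrix R' M := by
  ext i j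
  simp [supportMatrix, apply_ite f]

section Encoding

variable [LinearOrder α] [LinearOrder β] {M : ι → κ → ℤ} {col : α → ι} {row : β → κ}

/-- Within a cell, `σ` and `τ` are monotone of the same kind with the same range. -/
theorem IsMonotoneOnCells.ext [Finite α] (hM : ∀ i j, M i j = 0 ∨ M i j = 1 ∨ M i j = -1)
    {σ τ : α ≃ β} (hσ : IsMonotoneOnCells M col row σ) (hτ : IsMonotoneOnCells M col row τ)
    (hrow : row ∘ σ = row ∘ τ) (hcol : col ∘ σ.symm = col ∘ τ.symm) : σ = τ := by
  ext p₀
  let Cell := {p // col p = col p₀ ∧ row (σ p) = row (σ p₀)}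
  have hrow' (p : α) : row (σ p) = row (τ p) := congrFun hrow p
  have hcol' (v : β) : col (σ.symm v) = col (τ.symm v) := congrFun hcol v
  have hrange : Set.range (fun p : Cell => σ p) = Set.range (fun p : Cell => τ p) := by
    refine Set.Subset.antisymm ?_ ?_
    · rintro _ ⟨⟨p, hp⟩, rfl⟩
      exact ⟨⟨τ.symm (σ p), by simpa [← hcol', hrow'] using hp⟩, by simp⟩
    · rintro _ ⟨⟨p, hp⟩, rfl⟩
      exact ⟨⟨σ.symm (τ p), by simpa [hcol', ← hrow'] using hp⟩, by simp⟩
  have hσcell (p q : Cell) (hpq : p < q) := hσ.2 p q (p.2.1.trans q.2.1.symm)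
    (p.2.2.trans q.2.2.symm) hpq
  have hτcell (p q : Cell) (hpq : p < q) := hτ.2 p q (p.2.1.trans q.2.1.symm)
    (by rw [← hrow', ← hrow']; exact p.2.2.trans q.2.2.symm) hpq
  have hcell (p : Cell) : M (col p) (row (σ p)) = M (col p₀) (row (σ p₀)) := by rw [p.2.1, p.2.2]
  have hcell' (p : Cell) : M (col p) (row (τ p)) = M (col p₀) (row (σ p₀)) := by
    rw [← hrow', hcell]
  suffices (fun p : Cell => σ p) = fun p : Cell => τ p from congrFun this ⟨p₀, rfl, rfl⟩
  rcases hM (col p₀) (row (σ p₀)) with h | h | h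
  · exact absurd h (hσ.1 p₀)
  · refine (StrictMono.range_inj (fun p q hpq => ?_) fun p q hpq => ?_).1 hrange
    · exact (hσcell p q hpq).1 ((hcell p).trans h)
    · exact (hτcell p q hpq).1 ((hcell' p).trans h)
  · refine (StrictAnti.range_inj (fun p q hpq => ?_) fun p q hpq => ?_).1 hrange
    · exact (hσcell p q hpq).2 ((hcell p).trans h)
    · exact (hτcell p q hpq).2 ((hcell' p).trans h)

theorem IsMonotoneOnCells.supportMatrix_eq_one {σ : α ≃ β} (hσ : IsMonotoneOnCells M col row σ)
    (p : α) : supportMatrix ℝ M (col p) (row (σ p)) = 1 :=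
  if_neg (hσ.1 p)

theorem IsMonotoneOnCells.supportMatrix_symm_eq_one {σ : α ≃ β} (hσ : IsMonotoneOnCells M col row σ)
    (v : β) : supportMatrix ℝ M (col (σ.symm v)) (row v) = 1 := by
  simpa using hσ.supportMatrix_eq_one (σ.symm v)

end Encoding

section UpperBound

open Matrix

variable [Fintype α] [Fintype ι] [Fintype κ]

theorem sum_prod_mul_prod_eq_prod_mulVec [Fintype β] [DecidableEq α] [DecidableEq β]
    (S : Matrix ι κ ℝ) (x : ι → ℝ) (y : κ → ℝ) (col : α → ι) (row : β → κ) :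
    ∑ w : (α → κ) × (β → ι),
        (∏ p, S (col p) (w.1 p) * y (w.1 p)) * ∏ v, S (w.2 v) (row v) * x (w.2 v) =
      (∏ p, (S *ᵥ y) (col p)) * ∏ v, (Sᵀ *ᵥ x) (row v) := by
  simp only [mulVec, dotProduct, transpose_apply, Fintype.prod_sum, Fintype.sum_prod_type,
    Finset.sum_mul_sum]

variable [LinearOrder α] [LinearOrder β] {M : ι → κ → ℤ} {col : α → ι} {row : β → κ}

/-- A permutation `σ` is encoded by the words `row ∘ σ` and `col ∘ σ⁻¹`. Giving the letters
the weights `y` and `x`, all codes have the same weight. -/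
theorem card_isMonotoneOnCells_mul_le [Fintype β]
    (hM : ∀ i j, M i j = 0 ∨ M i j = 1 ∨ M i j = -1) {x : ι → ℝ} {y : κ → ℝ}
    (hx : ∀ i, 0 ≤ x i) (hy : ∀ j, 0 ≤ y j) :
    Nat.card {σ : α ≃ β // IsMonotoneOnCells M col row σ} *
        ((∏ p, x (col p)) * ∏ v, y (row v)) ≤
      (∏ p, (supportMatrix ℝ M *ᵥ y) (col p)) * ∏ v, ((supportMatrix ℝ M)ᵀ *ᵥ x) (row v) := by
  let code : {σ : α ≃ β // IsMonotoneOnCells M col row σ} → (α → κ) × (β → ι) :=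
    fun σ => (row ∘ σ.1, col ∘ σ.1.symm)
  have hcode : Function.Injective code := fun σ τ h =>
    Subtype.ext (σ.2.ext hM τ.2 (congrArg Prod.fst h) (congrArg Prod.snd h))
  set S := supportMatrix ℝ M
  have hS : ∀ i j, 0 ≤ S i j := supportMatrix_nonneg M
  let weight : (α → κ) × (β → ι) → ℝ := fun w =>
    (∏ p, S (col p) (w.1 p) * y (w.1 p)) * ∏ v, S (w.2 v) (row v) * x (w.2 v)
  have hweight_nonneg (w) : 0 ≤ weight w :=
    mul_nonneg (Finset.prod_nonneg fun p _ => mul_nonneg (hS _ _) (hy _))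
      (Finset.prod_nonneg fun v _ => mul_nonneg (hS _ _) (hx _))
  have hweight (σ) : weight (code σ) = (∏ p, x (col p)) * ∏ v, y (row v) := by
    simp only [weight, code, Function.comp_apply, S, σ.2.supportMatrix_eq_one,
      σ.2.supportMatrix_symm_eq_one, one_mul]
    rw [σ.1.prod_comp fun v => y (row v), σ.1.symm.prod_comp fun p => x (col p), mul_comm]
  calc _ = ∑ w ∈ Finset.univ.map ⟨code, hcode⟩, weight w := by
        rw [Finset.sum_map, Nat.card_eq_fintype_card]
        simp only [Function.Embedding.coeFn_mk, hweight, Finset.sum_const, Finset.card_univ,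
          nsmul_eq_mul]
    _ ≤ ∑ w, weight w := Finset.sum_le_univ_sum_of_nonneg hweight_nonneg
    _ = _ := sum_prod_mul_prod_eq_prod_mulVec S x y col row

theorem card_isMonotoneOnCells_le (hM : ∀ i j, M i j = 0 ∨ M i j = 1 ∨ M i j = -1) {x : ι → ℝ}
    {m : ℝ} (hx : ∀ i, 0 < x i) (hm : 0 ≤ m)
    (hxm : (supportMatrix ℝ M * (supportMatrix ℝ M)ᵀ) *ᵥ x ≤ m • x) :
    (Nat.card {σ : α ≃ β // IsMonotoneOnCells M col row σ} : ℝ) ≤ m ^ Fintype.card α := by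
  rcases isEmpty_or_nonempty {σ : α ≃ β // IsMonotoneOnCells M col row σ} with _ | ⟨⟨σ, hσ⟩⟩
  · simp only [Nat.card_of_isEmpty, Nat.cast_zero]
    positivity
  have := Fintype.ofEquiv α σ
  rw [← mulVec_mulVec] at hxm
  set y := (supportMatrix ℝ M)ᵀ *ᵥ x
  have hy_nonneg : 0 ≤ y :=
    mulVec_nonneg_of_nonneg (fun j i => supportMatrix_nonneg M i j) fun i => (hx i).le
  have hy_pos (v : β) : 0 < y (row v) := by
    refine Finset.sum_pos' (fun i _ => mul_nonneg (supportMatrix_nonneg M i _) (hx i).le)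
      ⟨col (σ.symm v), Finset.mem_univ _, ?_⟩
    exact mul_pos (one_pos.trans_eq (hσ.supportMatrix_symm_eq_one v).symm) (hx _)
  have hpos : 0 < (∏ p, x (col p)) * ∏ v, y (row v) :=
    mul_pos (Finset.prod_pos fun p _ => hx _) (Finset.prod_pos fun v _ => hy_pos v)
  refine le_of_mul_le_mul_right ?_ hpos
  calc _ ≤ (∏ p, (supportMatrix ℝ M *ᵥ y) (col p)) * ∏ v, y (row v) :=
        card_isMonotoneOnCells_mul_le hM (fun i => (hx i).le) hy_nonneg
    _ ≤ (∏ p, m * x (col p)) * ∏ v, y (row v) := by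
        refine mul_le_mul_of_nonneg_right (Finset.prod_le_prod (fun p _ => ?_) fun p _ => hxm _)
          (Finset.prod_nonneg fun v _ => hy_nonneg _)
        exact mulVec_nonneg_of_nonneg (supportMatrix_nonneg M) hy_nonneg _
    _ = m ^ Fintype.card α * ((∏ p, x (col p)) * ∏ v, y (row v)) := by
        rw [Finset.prod_mul_distrib, Finset.prod_const, Finset.card_univ, mul_assoc]

end UpperBound

section LowerBound

theorem exists_equiv_strictMono_strictAnti [LinearOrder α] [LinearOrder β] [Finite α] [Finite β]
    (h : Nat.card α = Nat.card β) (s : ℤ) :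
    ∃ e : α ≃ β, (s = 1 → StrictMono e) ∧ (s = -1 → StrictAnti e) := by
  have := Fintype.ofFinite α
  have := Fintype.ofFinite β
  rw [Nat.card_eq_fintype_card, Nat.card_eq_fintype_card] at h
  let e₁ : Fin (Fintype.card α) ≃o α := Fintype.orderIsoFinOfCardEq α rfl
  let e₂ : Fin (Fintype.card α) ≃o β := Fintype.orderIsoFinOfCardEq β h.symm
  by_cases hs : s = 1
  · exact ⟨(e₁.symm.trans e₂).toEquiv, fun _ => (e₁.symm.trans e₂).strictMono, by lia⟩
  · refine ⟨e₁.symm.toEquiv.trans (Fin.revPerm.trans e₂.toEquiv), fun h => absurd h hs, fun _ => ?_⟩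
    exact (e₂.strictMono.comp_strictAnti Fin.rev_strictAnti).comp_strictMono e₁.symm.strictMono

/-- Match up the points of each cell monotonically. -/
theorem exists_isMonotoneOnCells [LinearOrder α] [LinearOrder β] [Finite α] [Finite β]
    {M : ι → κ → ℤ} {col : α → ι} {row : β → κ} {f : α → κ} {g : β → ι}
    (hcard : ∀ i j, Nat.card {p // col p = i ∧ f p = j} = Nat.card {v // row v = j ∧ g v = i})
    (hM : ∀ p, M (col p) (f p) ≠ 0) :
    ∃ σ : α ≃ β, IsMonotoneOnCells M col row σ ∧ row ∘ σ = f ∧ col ∘ σ.symm = g := by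
  let φ : α → ι × κ := fun p => (col p, f p)
  let ψ : β → ι × κ := fun v => (g v, row v)
  have hfiber (c : ι × κ) : Nat.card {p // φ p = c} = Nat.card {v // ψ v = c} := by
    simpa only [φ, ψ, Prod.ext_iff, and_comm] using hcard c.1 c.2
  choose e he_mono he_anti using fun c : ι × κ =>
    exists_equiv_strictMono_strictAnti (hfiber c) (M c.1 c.2)
  let σ : α ≃ β := (Equiv.sigmaFiberEquiv φ).symm.trans
    ((Equiv.sigmaCongrRight e).trans (Equiv.sigmaFiberEquiv ψ))
  have hσe (c : ι × κ) (p : α) (hp : φ p = c) : σ p = e c ⟨p, hp⟩ := by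
    subst hp
    rfl
  have hψσ (p : α) : ψ (σ p) = φ p := by
    rw [hσe (φ p) p rfl]
    exact (e (φ p) ⟨p, rfl⟩).2
  have hrow (p : α) : row (σ p) = f p := congrArg Prod.snd (hψσ p)
  have hcol (p : α) : g (σ p) = col p := congrArg Prod.fst (hψσ p)
  refine ⟨σ, ⟨fun p => hrow p ▸ hM p, fun p q hpq hpq' hlt => ?_⟩, funext hrow, funext fun v => ?_⟩
  · have hq : φ q = φ p := Prod.ext hpq.symm (by rw [hrow, hrow] at hpq'; exact hpq'.symm)
    rw [hrow, hσe (φ p) p rfl, hσe (φ p) q hq]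
    exact ⟨fun h => he_mono (φ p) h (a := ⟨p, rfl⟩) (b := ⟨q, hq⟩) hlt,
      fun h => he_anti (φ p) h (a := ⟨p, rfl⟩) (b := ⟨q, hq⟩) hlt⟩
  · rw [Function.comp_apply, ← hcol, Equiv.apply_symm_apply]

theorem card_wordsOfJointContent_mul_le [LinearOrder α] [LinearOrder β] [Finite α] [Finite β]
    [Finite ι] [Finite κ] {M : ι → κ → ℤ} {a : ι → κ → ℕ} (ha : ∀ i j, M i j = 0 → a i j = 0)
    (col : α → ι) (row : β → κ) :
    Nat.card (wordsOfJointContent col a) * Nat.card (wordsOfJointContent row fun j i => a i j) ≤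
      Nat.card {σ : α ≃ β // IsMonotoneOnCells M col row σ} := by
  have hM (f : wordsOfJointContent col a) (p : α) : M (col p) (f.1 p) ≠ 0 := fun h => by
    have hempty := f.2 (col p) (f.1 p)
    rw [ha _ _ h, Finite.card_eq_zero_iff] at hempty
    exact hempty.false ⟨p, rfl, rfl⟩
  choose σ hσ hσf hσg using
    fun w : wordsOfJointContent col a × wordsOfJointContent row fun j i => a i j =>
      exists_isMonotoneOnCells (fun i j => (w.1.2 i j).trans (w.2.2 j i).symm) (hM w.1)
  rw [← Nat.card_prod]
  refine Nat.card_le_card_of_injective (fun w => ⟨σ w, hσ w⟩) fun w w' h => ?_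
  have hσσ : σ w = σ w' := congrArg Subtype.val h
  refine Prod.ext (Subtype.ext ?_) (Subtype.ext ?_)
  · rw [← hσf w, ← hσf w', hσσ]
  · rw [← hσg w, ← hσg w', hσσ]

end LowerBound

end CellLabels

section Division

/-- `c` lists the dividers of a division of `{0, …, k - 1}` into `t` consecutive, possibly empty
intervals. -/
structure IsDivision {t : ℕ} (k : ℕ) (c : Fin (t + 1) → ℕ) : Prop where
  monotone : Monotone c
  zero : c 0 = 0
  last : c (Fin.last t) = k

variable {t u k : ℕ} {c : Fin (t + 1) → ℕ} {r : Fin (u + 1) → ℕ}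

theorem IsDivision.le (hc : IsDivision k c) (i : Fin (t + 1)) : c i ≤ k :=
  (hc.monotone (Fin.le_last i)).trans_eq hc.last

theorem IsDivision.existsUnique_mem_Ico (hc : IsDivision k c) (p : Fin k) :
    ∃! i : Fin t, (p : ℕ) ∈ Set.Ico (c i.castSucc) (c i.succ) := by
  refine existsUnique_of_exists_of_unique ?_ fun i j hi hj => ?_
  · by_contra! hnot
    have hle (i : Fin (t + 1)) : c i ≤ p := by
      induction i using Fin.induction with
      | zero => exact hc.zero.trans_le (Nat.zero_le _)
      | succ i ih => exact not_lt.1 fun h => hnot i ⟨ih, h⟩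
    exact (hle (Fin.last t)).not_gt (p.2.trans_eq hc.last.symm)
  · have hle {i j : Fin t} (hi : (p : ℕ) ∈ Set.Ico (c i.castSucc) (c i.succ))
        (hj : (p : ℕ) ∈ Set.Ico (c j.castSucc) (c j.succ)) : i ≤ j :=
      Fin.castSucc_lt_succ_iff.1 (hc.monotone.reflect_lt (hi.1.trans_lt hj.2))
    exact le_antisymm (hle hi hj) (hle hj hi)

/-- The index of the interval of the division that contains `p`. -/
def IsDivision.label (hc : IsDivision k c) (p : Fin k) : Fin t :=
  (hc.existsUnique_mem_Ico p).choose

theorem IsDivision.label_eq_iff (hc : IsDivision k c) {p : Fin k} {i : Fin t} :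
    hc.label p = i ↔ c i.castSucc ≤ p ∧ p < c i.succ := by
  have hlabel := (hc.existsUnique_mem_Ico p).choose_spec
  exact ⟨fun h => h ▸ hlabel.1, fun h => (hlabel.2 i h).symm⟩

theorem IsDivision.card_label (hc : IsDivision k c) (i : Fin t) :
    Nat.card {p // hc.label p = i} = c i.succ - c i.castSucc := by
  let f (p : {p // hc.label p = i}) : Finset.Ico (c i.castSucc) (c i.succ) :=
    ⟨p, Finset.mem_Ico.2 (hc.label_eq_iff.1 p.2)⟩
  have hf : Function.Bijective f := by
    refine ⟨fun p q h => Subtype.ext (Fin.ext (congrArg Subtype.val h)), fun ⟨v, hv⟩ => ?_⟩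
    have hv' := Finset.mem_Ico.1 hv
    exact ⟨⟨⟨v, hv'.2.trans_le (hc.le _)⟩, hc.label_eq_iff.2 hv'⟩, rfl⟩
  rw [Nat.card_eq_of_bijective f hf, Nat.card_eq_fintype_card, Fintype.card_coe, Nat.card_Ico]

theorem exists_isDivision_card_label {A : Fin t → ℕ} (hA : ∑ i, A i = k) :
    ∃ (c : Fin (t + 1) → ℕ) (hc : IsDivision k c), ∀ i, Nat.card {p // hc.label p = i} = A i := by
  have hc : IsDivision k (Fin.partialSum A) := by
    refine ⟨Fin.monotone_iff_le_succ.2 fun i => ?_, Fin.partialSum_zero A, ?_⟩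
    · rw [Fin.partialSum_succ]
      exact Nat.le_add_right _ _
    · rw [← hA, Fin.partialSum, Fin.val_last, List.take_of_length_le (by simp), List.sum_ofFn]
  exact ⟨_, hc, fun i => by rw [hc.card_label, Fin.partialSum_succ, Nat.add_sub_cancel_left]⟩

theorem isGridding_iff_isMonotoneOnCells {M : Fin t → Fin u → ℤ} {σ : Equiv.Perm (Fin k)} :
    IsGridding M σ c r ↔
      ∃ (hc : IsDivision k c) (hr : IsDivision k r), IsMonotoneOnCells M hc.label hr.label σ := by
  have inCell_iff (hc : IsDivision k c) (hr : IsDivision k r) (i : Fin t) (j : Fin u) (p : Fin k) :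
      InCell σ c r i j p ↔ hc.label p = i ∧ hr.label (σ p) = j := by
    rw [hc.label_eq_iff, hr.label_eq_iff, InCell, and_assoc]
  constructor
  · rintro ⟨hc, hr, hc_zero, hc_last, hr_zero, hr_last, h⟩
    have hc : IsDivision k c := ⟨hc, hc_zero, hc_last⟩
    have hr : IsDivision k r := ⟨hr, hr_zero, hr_last⟩
    simp only [inCell_iff hc hr] at h
    exact ⟨hc, hr, fun p h₀ => (h _ _).1 h₀ p ⟨rfl, rfl⟩, fun p q hcol hrow hpq =>
      ⟨fun h₁ => (h _ _).2.1 h₁ p q ⟨rfl, rfl⟩ ⟨hcol.symm, hrow.symm⟩ hpq,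
        fun h₁ => (h _ _).2.2 h₁ p q ⟨rfl, rfl⟩ ⟨hcol.symm, hrow.symm⟩ hpq⟩⟩
  · rintro ⟨hc, hr, h⟩
    refine ⟨hc.monotone, hr.monotone, hc.zero, hc.last, hr.zero, hr.last, fun i j => ?_⟩
    simp only [inCell_iff hc hr]
    refine ⟨?_, ?_, ?_⟩
    · rintro h₀ p ⟨rfl, rfl⟩
      exact h.1 p h₀
    · rintro h₁ p q ⟨rfl, rfl⟩ ⟨hcol, hrow⟩ hpq
      exact (h.2 p q hcol.symm hrow.symm hpq).1 h₁
    · rintro h₁ p q ⟨rfl, rfl⟩ ⟨hcol, hrow⟩ hpq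
      exact (h.2 p q hcol.symm hrow.symm hpq).2 h₁

end Division

section GridCount

open Matrix
open scoped Nat

variable {t u : ℕ} {M : Fin t → Fin u → ℤ}

theorem card_isGridding_le (hM : ∀ i j, M i j = 0 ∨ M i j = 1 ∨ M i j = -1) {x : Fin t → ℝ} {m : ℝ}
    (hx : ∀ i, 0 < x i) (hm : 0 ≤ m)
    (hxm : (supportMatrix ℝ M * (supportMatrix ℝ M)ᵀ) *ᵥ x ≤ m • x) (n : ℕ)
    (c : Fin (t + 1) → ℕ) (r : Fin (u + 1) → ℕ) :
    (Nat.card {σ : Equiv.Perm (Fin n) // IsGridding M σ c r} : ℝ) ≤ m ^ n := by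
  simp only [isGridding_iff_isMonotoneOnCells]
  by_cases h : IsDivision n c ∧ IsDivision n r
  · simpa only [h.1, h.2, exists_true_left, Fintype.card_fin] using
      card_isMonotoneOnCells_le (col := h.1.label) (row := h.2.label) hM hx hm hxm
  · have : IsEmpty {σ : Equiv.Perm (Fin n) // ∃ (hc : IsDivision n c) (hr : IsDivision n r),
        IsMonotoneOnCells M hc.label hr.label σ} := ⟨fun ⟨_, hc, hr, _⟩ => h ⟨hc, hr⟩⟩
    rw [Nat.card_of_isEmpty, Nat.cast_zero]
    positivity

theorem gridCount_le_s2 (hM : ∀ i j, M i j = 0 ∨ M i j = 1 ∨ M i j = -1) {x : Fin t → ℝ} {m : ℝ}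
    (hx : ∀ i, 0 < x i) (hm : 0 ≤ m)
    (hxm : (supportMatrix ℝ M * (supportMatrix ℝ M)ᵀ) *ᵥ x ≤ m • x) (n : ℕ) :
    (gridCount M n : ℝ) ≤ ((n : ℝ) + 1) ^ (t + 1 + (u + 1)) * m ^ n := by
  let Dividers := (Fin (t + 1) → Fin (n + 1)) × (Fin (u + 1) → Fin (n + 1))
  let Gridded (d : Dividers) := {σ : Equiv.Perm (Fin n) //
    IsGridding M σ (fun i => (d.1 i : ℕ)) fun j => (d.2 j : ℕ)}
  have hforget : gridCount M n ≤ Nat.card (Σ d, Gridded d) := by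
    refine Nat.card_le_card_of_surjective (fun g => ⟨g.2.1, _, _, g.2.2⟩) ?_
    rintro ⟨σ, c, r, h⟩
    obtain ⟨hc, hr, -⟩ := isGridding_iff_isMonotoneOnCells.1 h
    exact ⟨⟨(fun i => ⟨c i, Nat.lt_succ_of_le (hc.le i)⟩,
      fun j => ⟨r j, Nat.lt_succ_of_le (hr.le j)⟩), σ, h⟩, rfl⟩
  calc (gridCount M n : ℝ) ≤ Nat.card (Σ d, Gridded d) := Nat.cast_le.2 hforget
    _ = ∑ d, (Nat.card (Gridded d) : ℝ) := by rw [Nat.card_sigma, Nat.cast_sum]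
    _ ≤ ∑ _d : Dividers, m ^ n :=
        Finset.sum_le_sum fun d _ => card_isGridding_le hM hx hm hxm n _ _
    _ = ((n : ℝ) + 1) ^ (t + 1 + (u + 1)) * m ^ n := by
        simp [Dividers, pow_add]

theorem prod_factorial_le_gridCount_mul {n : ℕ} {a : Fin t → Fin u → ℕ}
    (ha : ∀ i j, M i j = 0 → a i j = 0) (hn : ∑ i, ∑ j, a i j = n) :
    (∏ i, (∑ j, a i j)!) * ∏ j, (∑ i, a i j)! ≤ gridCount M n * (∏ i, ∏ j, (a i j)!) ^ 2 := by
  obtain ⟨c, hc, hcard_col⟩ := exists_isDivision_card_label hn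
  obtain ⟨r, hr, hcard_row⟩ := exists_isDivision_card_label (Finset.sum_comm.trans hn)
  have hcount : Nat.card {σ // IsMonotoneOnCells M hc.label hr.label σ} ≤ gridCount M n :=
    Nat.card_le_card_of_injective
      (Subtype.map id fun σ hσ => ⟨c, r, isGridding_iff_isMonotoneOnCells.2 ⟨hc, hr, hσ⟩⟩)
      (Subtype.map_injective _ Function.injective_id)
  calc (∏ i, (∑ j, a i j)!) * ∏ j, (∑ i, a i j)!
      ≤ (Nat.card (wordsOfJointContent hc.label a) * ∏ i, ∏ j, (a i j)!) *
          (Nat.card (wordsOfJointContent hr.label fun j i => a i j) * ∏ j, ∏ i, (a i j)!) :=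
        Nat.mul_le_mul (prod_factorial_le_card_wordsOfJointContent_mul hcard_col)
          (prod_factorial_le_card_wordsOfJointContent_mul hcard_row)
    _ = Nat.card (wordsOfJointContent hc.label a) *
          Nat.card (wordsOfJointContent hr.label fun j i => a i j) * (∏ i, ∏ j, (a i j)!) ^ 2 := by
        rw [Finset.prod_comm (s := (Finset.univ : Finset (Fin u)))]
        ring
    _ ≤ gridCount M n * (∏ i, ∏ j, (a i j)!) ^ 2 :=
        Nat.mul_le_mul_right _ ((card_wordsOfJointContent_mul_le ha _ _).trans hcount)

end GridCount

section Entropy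

open Real Topology
open scoped Nat Matrix

theorem neg_negMulLog_sub_le_log_factorial (k : ℕ) : -negMulLog k - k ≤ log (k ! : ℝ) := by
  rcases k.eq_zero_or_pos with rfl | hk
  · simp
  have hk' : (0 : ℝ) < k := Nat.cast_pos.2 hk
  have hfac : (0 : ℝ) < k ! := Nat.cast_pos.2 k.factorial_pos
  have h := log_le_log (by positivity) (pow_div_factorial_le_exp (k : ℝ) hk'.le k)
  rw [log_exp, log_div (pow_ne_zero _ hk'.ne') hfac.ne', log_pow] at h
  rw [negMulLog]
  linarith

theorem log_factorial_le (k : ℕ) :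
    log (k ! : ℝ) ≤ -negMulLog k - k + (1 + log ((k : ℝ) + 1)) := by
  rcases k with _ | k
  · simp
  have hk : (0 : ℝ) < (k + 1 : ℕ) := by positivity
  have h := Stirling.log_stirlingSeq'_antitone (Nat.zero_le k)
  simp only [Function.comp_apply, Nat.succ_eq_add_one, Stirling.log_stirlingSeq_formula] at h
  rw [log_div hk.ne' (exp_pos 1).ne', log_mul two_ne_zero hk.ne', log_exp] at h
  simp only [zero_add, Nat.factorial_one, Nat.cast_one, log_one, mul_one, log_div one_ne_zero
    (exp_pos 1).ne', log_exp, one_mul] at h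
  have hlog_nonneg : 0 ≤ log ((k + 1 : ℕ) : ℝ) := log_natCast_nonneg _
  have hlog_le : log ((k + 1 : ℕ) : ℝ) ≤ log ((k + 1 : ℕ) + 1 : ℝ) :=
    log_le_log hk (le_add_of_nonneg_right zero_le_one)
  rw [negMulLog]
  linarith

variable {ι κ : Type*} [Fintype ι] [Fintype κ]

/-- If `w` is the joint distribution of a column and a row, this is the sum of the two conditional
entropies of one given the other. It is the exponential growth rate of the number of gridded
permutations in which each cell `(i, j)` holds a proportion `w i j` of the points. -/
def gridEntropy (w : ι → κ → ℝ) : ℝ :=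
  2 * ∑ i, ∑ j, negMulLog (w i j) - ∑ i, negMulLog (∑ j, w i j) - ∑ j, negMulLog (∑ i, w i j)

theorem continuous_gridEntropy : Continuous (gridEntropy : (ι → κ → ℝ) → ℝ) := by
  unfold gridEntropy
  fun_prop

theorem gridEntropy_smul (s : ℝ) (w : ι → κ → ℝ) : gridEntropy (s • w) = s * gridEntropy w := by
  simp only [gridEntropy, Pi.smul_apply, smul_eq_mul, ← Finset.mul_sum, negMulLog_mul,
    Finset.sum_add_distrib, ← Finset.sum_mul]
  rw [Finset.sum_comm (f := fun j i => w i j)]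
  ring

/-- The linear terms of Stirling's formula cancel. -/
theorem gridEntropy_le_sum_log_factorial {a : ι → κ → ℕ} {n : ℕ} (ha : ∀ i j, a i j ≤ n) :
    gridEntropy (fun i j => (a i j : ℝ)) -
        2 * (Fintype.card ι * Fintype.card κ * (1 + log ((n : ℝ) + 1))) ≤
      ∑ i, log ((∑ j, a i j)! : ℝ) + ∑ j, log ((∑ i, a i j)! : ℝ) -
        2 * ∑ i, ∑ j, log ((a i j)! : ℝ) := by
  have hcol : ∑ i, (-negMulLog (∑ j, (a i j : ℝ)) - ∑ j, (a i j : ℝ)) ≤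
      ∑ i, log ((∑ j, a i j)! : ℝ) := Finset.sum_le_sum fun i _ => by
    simpa only [Nat.cast_sum] using neg_negMulLog_sub_le_log_factorial (∑ j, a i j)
  have hrow : ∑ j, (-negMulLog (∑ i, (a i j : ℝ)) - ∑ i, (a i j : ℝ)) ≤
      ∑ j, log ((∑ i, a i j)! : ℝ) := Finset.sum_le_sum fun j _ => by
    simpa only [Nat.cast_sum] using neg_negMulLog_sub_le_log_factorial (∑ i, a i j)
  have hcell : ∑ i, ∑ j, log ((a i j)! : ℝ) ≤
      ∑ i, ∑ j, (-negMulLog (a i j) - a i j + (1 + log ((n : ℝ) + 1))) := by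
    refine Finset.sum_le_sum fun i _ => Finset.sum_le_sum fun j _ => (log_factorial_le _).trans ?_
    gcongr
    exact ha i j
  rw [Finset.sum_sub_distrib, Finset.sum_neg_distrib] at hcol hrow
  rw [Finset.sum_comm (f := fun j i => (a i j : ℝ))] at hrow
  simp only [Finset.sum_add_distrib, Finset.sum_sub_distrib, Finset.sum_neg_distrib,
    Finset.sum_const, Finset.card_univ, nsmul_eq_mul] at hcell
  rw [gridEntropy]
  linarith

/-- The column sums are `l * x i ^ 2` and the row sums `y j ^ 2`, so the logarithms of `x i` and
`y j` cancel cell by cell. -/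
theorem gridEntropy_mul_mul_eq {S : Matrix ι κ ℝ} (hS : ∀ i j, S i j = 0 ∨ S i j = 1) {x : ι → ℝ}
    {y : κ → ℝ} {l : ℝ} (hl : l ≠ 0) (hx : Sᵀ *ᵥ x = y) (hy : S *ᵥ y = l • x) :
    gridEntropy (fun i j => x i * S i j * y j) = (∑ i, ∑ j, x i * S i j * y j) * log l := by
  have hcol (i : ι) : ∑ j, x i * S i j * y j = l * x i ^ 2 := by
    have := congrFun hy i
    simp only [Matrix.mulVec, dotProduct, Pi.smul_apply, smul_eq_mul] at this
    simp only [mul_assoc, ← Finset.mul_sum, this]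
    ring
  have hrow (j : κ) : ∑ i, x i * S i j * y j = y j ^ 2 := by
    have := congrFun hx j
    simp only [Matrix.mulVec, dotProduct, Matrix.transpose_apply] at this
    simp only [mul_comm (x _), ← Finset.sum_mul, this, sq]
  have hterm (i : ι) (j : κ) : 2 * negMulLog (x i * S i j * y j) +
      x i * S i j * y j * log (l * x i ^ 2) + x i * S i j * y j * log (y j ^ 2) =
        x i * S i j * y j * log l := by
    by_cases h : x i * S i j * y j = 0
    · simp only [h, negMulLog_zero, mul_zero, zero_mul, add_zero]
    obtain ⟨hxS, hyj⟩ := mul_ne_zero_iff.1 h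
    obtain ⟨hxi, hSij⟩ := mul_ne_zero_iff.1 hxS
    rw [(hS i j).resolve_left hSij, mul_one, negMulLog, log_mul hxi hyj,
      log_mul hl (pow_ne_zero 2 hxi), log_pow, log_pow]
    push_cast
    ring
  have hcol_sum : ∑ i, negMulLog (∑ j, x i * S i j * y j) =
      -∑ i, ∑ j, x i * S i j * y j * log (l * x i ^ 2) := by
    simp only [← Finset.sum_mul, hcol, negMulLog, neg_mul, Finset.sum_neg_distrib]
  have hrow_sum : ∑ j, negMulLog (∑ i, x i * S i j * y j) =
      -∑ i, ∑ j, x i * S i j * y j * log (y j ^ 2) := by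
    rw [Finset.sum_comm]
    simp only [← Finset.sum_mul, hrow, negMulLog, neg_mul, Finset.sum_neg_distrib]
  rw [gridEntropy, hcol_sum, hrow_sum, sub_neg_eq_add, sub_neg_eq_add, Finset.mul_sum]
  simp only [Finset.mul_sum, ← Finset.sum_add_distrib, hterm, Finset.sum_mul]

theorem exists_nat_tendsto_div {α : ι → ℝ} (hα : ∀ i, 0 ≤ α i) (hsum : ∑ i, α i = 1) :
    ∃ a : ℕ → ι → ℕ, (∀ n, ∑ i, a n i = n) ∧ (∀ n i, α i = 0 → a n i = 0) ∧
      ∀ i, Tendsto (fun n => (a n i : ℝ) / n) atTop (𝓝 (α i)) := by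
  obtain ⟨e, he⟩ : ∃ e, α e ≠ 0 := by
    by_contra! h
    simp [h] at hsum
  let floorSum (n : ℕ) : ℕ := ∑ i ∈ Finset.univ \ {e}, ⌊α i * n⌋₊
  have hα_sum : α e + ∑ i ∈ Finset.univ \ {e}, α i = 1 := by
    rw [add_comm, ← hsum, Finset.sum_sdiff_eq_sub (Finset.subset_univ _), Finset.sum_singleton,
      sub_add_cancel]
  have hfloorSum_le (n : ℕ) : floorSum n ≤ n := by
    rw [← Nat.cast_le (α := ℝ), Nat.cast_sum]
    calc ∑ i ∈ Finset.univ \ {e}, (⌊α i * n⌋₊ : ℝ)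
        ≤ ∑ i ∈ Finset.univ \ {e}, α i * n :=
          Finset.sum_le_sum fun i _ => Nat.floor_le (mul_nonneg (hα i) n.cast_nonneg)
      _ ≤ 1 * n := by
          rw [← Finset.sum_mul]
          gcongr
          linarith [hα e]
      _ = n := one_mul _
  have hfloor (i : ι) : Tendsto (fun n : ℕ => (⌊α i * n⌋₊ : ℝ) / n) atTop (𝓝 (α i)) :=
    (tendsto_nat_floor_mul_div_atTop (hα i)).comp tendsto_natCast_atTop_atTop
  have hrest : Tendsto (fun n : ℕ => ((n - floorSum n : ℕ) : ℝ) / n) atTop (𝓝 (α e)) := by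
    have h := tendsto_const_nhds (x := (1 : ℝ)).sub
      (tendsto_finsetSum (Finset.univ \ {e}) fun i _ => hfloor i)
    rw [← hα_sum, add_sub_cancel_right] at h
    refine h.congr' ?_
    filter_upwards [eventually_ne_atTop 0] with n hn
    rw [hα_sum, Nat.cast_sub (hfloorSum_le n), sub_div, div_self (Nat.cast_ne_zero.2 hn),
      ← Finset.sum_div, Nat.cast_sum]
  refine ⟨fun n => Function.update (fun i => ⌊α i * n⌋₊) e (n - floorSum n), fun n => ?_,
    fun n i hi => ?_, fun i => ?_⟩
  · rw [Finset.sum_update_of_mem (Finset.mem_univ e), Nat.sub_add_cancel (hfloorSum_le n)]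
  · have hie : i ≠ e := fun h => he (h ▸ hi)
    simp only [Function.update_of_ne hie, hi, zero_mul, Nat.floor_zero]
  · rcases eq_or_ne i e with rfl | hi
    · simpa only [Function.update_self] using hrest
    · simpa only [Function.update_of_ne hi] using hfloor i

end Entropy

section GrowthRate

open Matrix Topology
open scoped Nat

theorem tendsto_one_add_log_add_one_div :
    Tendsto (fun n : ℕ => (1 + Real.log ((n : ℝ) + 1)) / n) atTop (𝓝 0) := by
  have h := (Real.tendsto_pow_log_div_mul_add_atTop 1 (-1) 1 one_ne_zero).comp
    (tendsto_atTop_add_const_right atTop (1 : ℝ) tendsto_natCast_atTop_atTop)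
  simpa [Function.comp_def, add_div] using tendsto_one_div_atTop_nhds_zero_nat.add h

theorem tendsto_natCast_add_one_pow_rpow (K : ℕ) :
    Tendsto (fun n : ℕ => (((n : ℝ) + 1) ^ K) ^ (1 / (n : ℝ))) atTop (𝓝 1) := by
  have h := (tendsto_rpow_div_mul_add K 1 (-1) zero_ne_one).comp
    (tendsto_atTop_add_const_right atTop (1 : ℝ) tendsto_natCast_atTop_atTop)
  refine h.congr fun n => ?_
  rw [← Real.rpow_natCast, ← Real.rpow_mul (by positivity)]
  simp [div_eq_mul_inv]

variable {t u : ℕ} {M : Fin t → Fin u → ℤ}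

theorem supportMatrix_mul_transpose_nonneg (M : Fin t → Fin u → ℤ) (i j : Fin t) :
    0 ≤ (supportMatrix ℝ M * (supportMatrix ℝ M)ᵀ) i j :=
  mulVec_nonneg_of_nonneg (supportMatrix_nonneg M) (supportMatrix_nonneg M j) i

theorem gridCount_pos {n : ℕ} {a : Fin t → Fin u → ℕ} (ha : ∀ i j, M i j = 0 → a i j = 0)
    (hn : ∑ i, ∑ j, a i j = n) : 0 < gridCount M n := by
  have hpos : 0 < (∏ i, (∑ j, a i j)!) * ∏ j, (∑ i, a i j)! := by positivity
  exact Nat.pos_of_mul_pos_right (hpos.trans_le (prod_factorial_le_gridCount_mul ha hn))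

theorem gridEntropy_le_log_gridCount {n : ℕ} {a : Fin t → Fin u → ℕ}
    (ha : ∀ i j, M i j = 0 → a i j = 0) (hn : ∑ i, ∑ j, a i j = n) :
    gridEntropy (fun i j => (a i j : ℝ)) - 2 * (t * u * (1 + Real.log ((n : ℝ) + 1))) ≤
      Real.log (gridCount M n) := by
  have ha_le (i : Fin t) (j : Fin u) : a i j ≤ n := by
    rw [← hn, ← Fintype.sum_prod_type']
    exact Finset.single_le_sum (f := fun c : Fin t × Fin u => a c.1 c.2)
      (fun _ _ => Nat.zero_le _) (Finset.mem_univ (i, j))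
  have hentropy := gridEntropy_le_sum_log_factorial ha_le
  rw [Fintype.card_fin, Fintype.card_fin] at hentropy
  have hcount : (gridCount M n : ℝ) ≠ 0 := Nat.cast_ne_zero.2 (gridCount_pos ha hn).ne'
  have hlog := Real.log_le_log (by positivity)
    (Nat.cast_le (α := ℝ).2 (prod_factorial_le_gridCount_mul ha hn))
  push_cast at hlog
  rw [Real.log_mul (by positivity) (by positivity), Real.log_mul hcount (by positivity),
    Real.log_pow, Real.log_prod (fun _ _ => by positivity),
    Real.log_prod (fun _ _ => by positivity), Real.log_prod (fun _ _ => by positivity),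
    Finset.sum_congr rfl fun i _ => Real.log_prod (fun j _ => by positivity)] at hlog
  push_cast at hlog
  linarith

theorem eventually_lt_gridCount_rpow_of_lt_exp_gridEntropy {α : Fin t → Fin u → ℝ}
    (hα : ∀ i j, 0 ≤ α i j) (hsum : ∑ i, ∑ j, α i j = 1) (hαM : ∀ i j, M i j = 0 → α i j = 0)
    {b : ℝ} (hb : b < Real.exp (gridEntropy α)) :
    ∀ᶠ n : ℕ in atTop, b < (gridCount M n : ℝ) ^ (1 / (n : ℝ)) := by
  obtain ⟨a, ha_sum, ha_zero, ha_lim⟩ := exists_nat_tendsto_div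
    (α := fun c : Fin t × Fin u => α c.1 c.2) (fun c => hα _ _) (by rwa [Fintype.sum_prod_type])
  have hentropy : Tendsto (fun n : ℕ => gridEntropy ((n : ℝ)⁻¹ • fun i j => (a n (i, j) : ℝ)))
      atTop (𝓝 (gridEntropy α)) := by
    refine (continuous_gridEntropy.tendsto α).comp
      (tendsto_pi_nhds.2 fun i => tendsto_pi_nhds.2 fun j => ?_)
    simpa [div_eq_inv_mul] using ha_lim (i, j)
  have hlim := (Real.continuous_exp.tendsto _).comp
    (hentropy.sub (tendsto_one_add_log_add_one_div.const_mul (2 * (t * u : ℝ))))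
  rw [mul_zero, sub_zero] at hlim
  filter_upwards [hlim.eventually_const_lt hb] with n hbn
  have hcells : ∑ i, ∑ j, a n (i, j) = n := by rw [← Fintype.sum_prod_type', ha_sum]
  have hsupp (i : Fin t) (j : Fin u) (h : M i j = 0) : a n (i, j) = 0 := ha_zero n _ (hαM i j h)
  refine hbn.trans_le ?_
  rw [Real.rpow_def_of_pos (Nat.cast_pos.2 (gridCount_pos hsupp hcells)), Function.comp_apply,
    gridEntropy_smul, Real.exp_le_exp]
  calc _ = (n : ℝ)⁻¹ * (gridEntropy (fun i j => (a n (i, j) : ℝ)) -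
        2 * (t * u * (1 + Real.log ((n : ℝ) + 1)))) := by ring
    _ ≤ (n : ℝ)⁻¹ * Real.log (gridCount M n) := by
        gcongr
        exact gridEntropy_le_log_gridCount hsupp hcells
    _ = Real.log (gridCount M n) * (1 / n) := by ring

theorem eventually_lt_gridCount_rpow {x : Fin t → ℝ} {γ b : ℝ} (hx : 0 ≤ x) (hx₀ : x ≠ 0)
    (hγ : 0 ≤ γ) (hSx : (supportMatrix ℝ M * (supportMatrix ℝ M)ᵀ) *ᵥ x = γ • x) (hb : b < γ) :
    ∀ᶠ n : ℕ in atTop, b < (gridCount M n : ℝ) ^ (1 / (n : ℝ)) := by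
  rcases hγ.eq_or_lt with rfl | hγ
  · exact .of_forall fun n => hb.trans_le (by positivity)
  rw [← mulVec_mulVec] at hSx
  set S := supportMatrix ℝ M
  set y := Sᵀ *ᵥ x
  have hy_nonneg : 0 ≤ y := mulVec_nonneg_of_nonneg (fun j i => supportMatrix_nonneg M i j) hx
  have hw_nonneg (i : Fin t) (j : Fin u) : 0 ≤ x i * S i j * y j :=
    mul_nonneg (mul_nonneg (hx i) (supportMatrix_nonneg M i j)) (hy_nonneg j)
  obtain ⟨Z, hZ⟩ : ∃ Z, ∑ i, ∑ j, x i * S i j * y j = Z := ⟨_, rfl⟩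
  have hZ_pos : 0 < Z := by
    have : Z = γ * (x ⬝ᵥ x) := by
      rw [← hZ, ← smul_eq_mul, ← dotProduct_smul, ← hSx]
      simp only [dotProduct, mulVec, Finset.mul_sum, mul_assoc]
    rw [this]
    exact mul_pos hγ (dotProduct_self_star_pos_iff.2 hx₀)
  have hexp : Real.exp (gridEntropy (Z⁻¹ • fun i j => x i * S i j * y j)) = γ := by
    rw [gridEntropy_smul, gridEntropy_mul_mul_eq (fun i j => ?_) hγ.ne' rfl hSx, hZ,
      inv_mul_cancel_left₀ hZ_pos.ne', Real.exp_log hγ]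
    exact ite_eq_or_eq _ _ _
  refine eventually_lt_gridCount_rpow_of_lt_exp_gridEntropy
    (fun i j => mul_nonneg (inv_nonneg.2 hZ_pos.le) (hw_nonneg i j)) ?_ (fun i j h => ?_)
    (hb.trans_eq hexp.symm)
  · simp only [← Finset.mul_sum, hZ, inv_mul_cancel₀ hZ_pos.ne']
  · simp [S, supportMatrix, h]

theorem eventually_gridCount_rpow_lt [Nonempty (Fin t)]
    (hM : ∀ i j, M i j = 0 ∨ M i j = 1 ∨ M i j = -1) {γ b : ℝ} (hγ : 0 ≤ γ)
    (hS : (γ • 1 - supportMatrix ℝ M * (supportMatrix ℝ M)ᵀ).PosSemidef) (hb : γ < b) :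
    ∀ᶠ n : ℕ in atTop, (gridCount M n : ℝ) ^ (1 / (n : ℝ)) < b := by
  obtain ⟨m, hγm, hmb⟩ := exists_between hb
  have hm : 0 ≤ m := hγ.trans hγm.le
  obtain ⟨x, hx, hSx⟩ := exists_pos_mulVec_le_smul (supportMatrix_mul_transpose_nonneg M) hS hγm
  have hlim := (tendsto_natCast_add_one_pow_rpow (t + 1 + (u + 1))).mul_const m
  rw [one_mul] at hlim
  filter_upwards [hlim.eventually_lt_const hmb, eventually_ne_atTop 0] with n hn hn₀
  refine lt_of_le_of_lt ?_ hn
  calc (gridCount M n : ℝ) ^ (1 / (n : ℝ))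
      ≤ (((n : ℝ) + 1) ^ (t + 1 + (u + 1)) * m ^ n) ^ (1 / (n : ℝ)) := by
        gcongr
        exact gridCount_le_s2 hM hx hm hSx n
    _ = (((n : ℝ) + 1) ^ (t + 1 + (u + 1))) ^ (1 / (n : ℝ)) * m := by
        rw [Real.mul_rpow (by positivity) (by positivity), one_div,
          Real.pow_rpow_inv_natCast hm hn₀]

theorem isIntegral_of_supportMatrix_mulVec_eq_smul {x : Fin t → ℝ} {γ : ℝ} (hx₀ : x ≠ 0)
    (hSx : (supportMatrix ℝ M * (supportMatrix ℝ M)ᵀ) *ᵥ x = γ • x) : IsIntegral ℤ γ := by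
  refine isIntegral_of_map_mulVec_eq_smul (N := supportMatrix ℤ M * (supportMatrix ℤ M)ᵀ) hx₀ ?_
  rwa [Matrix.map_mul, transpose_map, map_supportMatrix]

end GrowthRate

/-- The growth rate of a monotone grid class (which exists) is an algebraic integer. -/
theorem grid_growth_rate_algebraic_integer {t u : ℕ} (ht : 1 ≤ t) (hu : 1 ≤ u)
    (M : Fin t → Fin u → ℤ) (hM : ∀ i j, M i j = 0 ∨ M i j = 1 ∨ M i j = -1) :
    ∃ γ : ℝ,
      Tendsto (fun n : ℕ => (gridCount M n : ℝ) ^ (1 / (n : ℝ))) atTop (nhds γ) ∧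
      IsIntegral ℤ γ := by
  have : Nonempty (Fin t) := ⟨⟨0, ht⟩⟩
  obtain ⟨γ, x, hγ, hx, hx₀, hSx, hS⟩ := exists_nonneg_eigenvector_posSemidef_smul_one_sub
    (Matrix.isHermitian_mul_conjTranspose_self (supportMatrix ℝ M))
    (supportMatrix_mul_transpose_nonneg M)
  exact ⟨γ, tendsto_order.2 ⟨fun b hb => eventually_lt_gridCount_rpow hx hx₀ hγ hSx hb,
    fun b hb => eventually_gridCount_rpow_lt hM hγ hS hb⟩,
    isIntegral_of_supportMatrix_mulVec_eq_smul hx₀ hSx⟩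
end
end
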